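/- Theorem 6.2 (regularization of the elastic hypersingular operator W_s, stated at points off the curve). Let Γ be a simple closed C² curve with L-periodic arclength parametrization z and normal n(s) determined by z'(s) = A n(s). In the setting of the fundamental-type tensor E built from Helmholtz solutions γ_s, γ_p (defined on an open set U ⊆ ℝ²), let u : ℝ → ℂ² be C¹ and L-periodic, let x ∈ ℝ² satisfy x − z(s) ∈ U for all s, and define the elastic double-layer potential D(x) = ∫₀^L (T_yẼ(z(s)))^T u(s) ds, where T_yẼ(z(s)) is the traction with respect to y, with normal n(s), applied columnwise to y ↦ E(x − y) at y = z(s). Then for every unit vector ν ∈ ℝ², with τ = A ν: −T_{ν} D(x) = μ k_s² ∫₀^L [ R(x−z(s)) ν n(s)^T − (ν·n(s)) γ_s(x−z(s)) I − (ν·z'(s)) γ_s(x−z(s)) A ] u(s) ds + 2μ²k_s² ∫₀^L (ν·z'(s)) A E(x−z(s)) u(s) ds − 4μ² ∫₀^L ((τ·∇)E)(x−z(s)) u'(s) ds + (4μ²/(λ+2μ)) ∫₀^L ((τ·∇)γ_p)(x−z(s)) u'(s) ds + 2μ ∫₀^L ((∇R)(x−z(s))·(A u'(s))) ν ds − 2μ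 ∫₀^L (ν·u'(s)) A (∇R)(x−z(s)) ds, where T_ν D = λ(div D)ν + 2μ(ν·∇)D + μ(∂₁D₂ − ∂₂D₁)(ν₂, −ν₁), and all dot products are bilinear (no complex conjugation). -/

import Mathlib

noncomputable section

/-- Points/vectors in the plane. -/
abbrev V2 : Type := Fin 2 → ℝ

/-- Complex 2-vectors. -/
abbrev C2 : Type := Fin 2 → ℂ

/-- The rotation-by-π/2 matrix A = [[0,-1],[1,0]] (real entries). -/
def Arot : Matrix (Fin 2) (Fin 2) ℝ := !![0, -1; 1, 0]

/-- The rotation-by-π/2 matrix A = [[0,-1],[1,0]] (complex entries). -/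
def ArotC : Matrix (Fin 2) (Fin 2) ℂ := !![0, -1; 1, 0]

/-- `pd i f x` is the `i`-th partial derivative of `f : ℝ² → ℂ` at `x`. -/
def pd (i : Fin 2) (f : V2 → ℂ) (x : V2) : ℂ :=
  fderiv ℝ f x (Pi.single i 1)

/-- Directional derivative `(v·∇)f` of a scalar field along the real vector `v`. -/
def dirD (v : V2) (f : V2 → ℂ) (x : V2) : ℂ :=
  (v 0 : ℂ) * pd 0 f x + (v 1 : ℂ) * pd 1 f x


/-- The Hessian matrix of a scalar field. -/
def hess (f : V2 → ℂ) (y : V2) : Matrix (Fin 2) (Fin 2) ℂ :=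
  Matrix.of fun i j => pd i (pd j f) y

/-- The fundamental-type tensor `E = (1/μ)γ_s I + (1/(ρω²)) Hess(γ_s − γ_p)`. -/
def Emat (mu rho om : ℝ) (γs γp : V2 → ℂ) (y : V2) : Matrix (Fin 2) (Fin 2) ℂ :=
  ((mu : ℂ)⁻¹ * γs y) • (1 : Matrix (Fin 2) (Fin 2) ℂ)
    + (((rho * om ^ 2 : ℝ) : ℂ))⁻¹ • hess (fun w => γs w - γp w) y

/-- The traction operator applied columnwise to a matrix field:
`(T_n F)_{·j} = λ(Σ_i ∂_i F_{ij}) n + 2μ (n·∇)F_{·j} + μ(∂₁F_{2j} − ∂₂F_{1j})(n₂, −n₁)`. -/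
def tracM (lam mu : ℝ) (n : V2) (F : V2 → Matrix (Fin 2) (Fin 2) ℂ) (x : V2) :
    Matrix (Fin 2) (Fin 2) ℂ :=
  Matrix.of fun i j =>
    (lam : ℂ) * (∑ l : Fin 2, pd l (fun y => F y l j) x) * (n i : ℂ)
      + 2 * (mu : ℂ) * ((n 0 : ℂ) * pd 0 (fun y => F y i j) x
          + (n 1 : ℂ) * pd 1 (fun y => F y i j) x)
      + (mu : ℂ) * (pd 0 (fun y => F y 1 j) x - pd 1 (fun y => F y 0 j) x)
          * ((![n 1, -n 0] : V2) i : ℂ)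

/-- The traction operator `T_n u = λ(div u)n + 2μ(n·∇)u + μ(∂₁u₂ − ∂₂u₁)(n₂, −n₁)` applied
to a vector field. -/
def tracV (lam mu : ℝ) (n : V2) (u : V2 → C2) (x : V2) : C2 := fun i =>
  (lam : ℂ) * (pd 0 (fun y => u y 0) x + pd 1 (fun y => u y 1) x) * (n i : ℂ)
    + 2 * (mu : ℂ) * ((n 0 : ℂ) * pd 0 (fun y => u y i) x + (n 1 : ℂ) * pd 1 (fun y => u y i) x)
    + (mu : ℂ) * (pd 0 (fun y => u y 1) x - pd 1 (fun y => u y 0) x) * ((![n 1, -n 0] : V2) i : ℂ)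

/-!
In terms of `div`, `curl` and the rotation `A`, the traction reads
`T_n u = (λ + 2μ)(div u) n + μ (curl u) A n + 2μ A (A n · ∇) u`. On the curve `A n` is the tangent,
so that the last term of the double-layer kernel is a tangential derivative of `E`; integrating by
parts along the closed curve moves it onto the density. The remaining integrand `elasticField` only
involves `∇γ_s`, `∇γ_p` and `E`, and its traction, computed under the integral sign, contains the
Hessians of `γ_s` and `γ_p`. The products of these Hessians with the tangent are tangential
derivatives of gradients: up to the six regularized terms, the traction is the total derivative
along the curve of `boundaryMatrix · u`, which integrates to zero. By the Helmholtz equations, all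
Laplacians that occur are multiples of `γ_s` and `γ_p`.
-/

open scoped Matrix

/-- The vector `v` of the plane, regarded as an element of `ℂ²`. -/
def complexify (v : V2) : C2 := fun i => (v i : ℂ)

/-- The gradient `∇f` of a scalar field. -/
def grad (f : V2 → ℂ) (y : V2) : C2 := fun i => pd i f y

/-- The divergence `∂₁v₁ + ∂₂v₂` of a vector field; in particular `divV (grad f)` is the
Laplacian `Δf`. -/
def divV (v : V2 → C2) (y : V2) : ℂ := pd 0 (fun w => v w 0) y + pd 1 (fun w => v w 1) y

/-- The scalar curl `∂₁v₂ − ∂₂v₁` of a vector field. -/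
def curlV (v : V2 → C2) (y : V2) : ℂ := pd 0 (fun w => v w 1) y - pd 1 (fun w => v w 0) y

/-- The derivative `(t·∇)v` of a vector field along `t`. -/
def dirV (t : V2) (v : V2 → C2) (y : V2) : C2 := fun i => dirD t (fun w => v w i) y

/-- The derivative `(t·∇)F` of a matrix field along `t`. -/
def dirM (t : V2) (F : V2 → Matrix (Fin 2) (Fin 2) ℂ) (y : V2) : Matrix (Fin 2) (Fin 2) ℂ :=
  Matrix.of fun i j => dirD t (fun w => F w i j) y

/-- `f` solves the Helmholtz equation `Δf + k²f = 0` on `U`. -/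
def IsHelmholtzOn (k : ℂ) (U : Set V2) (f : V2 → ℂ) : Prop :=
  ∀ y ∈ U, divV (grad f) y + k ^ 2 * f y = 0

section Rotation

variable (v : C2) (n : V2)

lemma ArotC_mulVec_zero : (ArotC *ᵥ v) 0 = -v 1 := by
  simp [ArotC, Matrix.mulVec, dotProduct]

lemma ArotC_mulVec_one : (ArotC *ᵥ v) 1 = v 0 := by
  simp [ArotC, Matrix.mulVec, dotProduct]

lemma Arot_mulVec_zero : (Arot *ᵥ n) 0 = -n 1 := by
  simp [Arot, Matrix.mulVec, dotProduct]

lemma Arot_mulVec_one : (Arot *ᵥ n) 1 = n 0 := by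
  simp [Arot, Matrix.mulVec, dotProduct]

lemma ArotC_mulVec_ArotC_mulVec : ArotC *ᵥ ArotC *ᵥ v = -v := by
  refine funext (Fin.forall_fin_two.2 ⟨?_, ?_⟩) <;>
    simp only [ArotC_mulVec_zero, ArotC_mulVec_one, Pi.neg_apply]

lemma Arot_mulVec_Arot_mulVec : Arot *ᵥ Arot *ᵥ n = -n := by
  refine funext (Fin.forall_fin_two.2 ⟨?_, ?_⟩) <;>
    simp only [Arot_mulVec_zero, Arot_mulVec_one, Pi.neg_apply]

lemma complexify_Arot_mulVec : complexify (Arot *ᵥ n) = ArotC *ᵥ complexify n := by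
  ext i
  fin_cases i <;> simp [complexify, Arot, ArotC, Matrix.mulVec, dotProduct]

lemma ArotC_mul_mul_ArotC {S : Matrix (Fin 2) (Fin 2) ℂ} (hS : S.IsSymm) :
    ArotC * S * ArotC = S - S.trace • 1 := by
  have h10 : S 1 0 = S 0 1 := hS.apply 0 1
  ext i j
  fin_cases i <;> fin_cases j <;>
    simp [ArotC, Matrix.mul_apply, Matrix.trace_fin_two, Matrix.vecMul, dotProduct, h10]

end Rotation

lemma contDiffAt_mulVec {H : Type*} [NormedAddCommGroup H] [NormedSpace ℝ H]
    {F : H → Matrix (Fin 2) (Fin 2) ℂ} {v : H → C2} {p : H} {m : WithTop ℕ∞}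
    (hF : ∀ i j, ContDiffAt ℝ m (fun q => F q i j) p) (hv : ContDiffAt ℝ m v p) :
    ContDiffAt ℝ m (fun q => F q *ᵥ v q) p := by
  refine contDiffAt_pi.2 fun i => ?_
  simp only [Matrix.mulVec, dotProduct]
  exact ContDiffAt.sum fun j _ => (hF i j).mul (contDiffAt_pi.1 hv j)

section PartialDerivatives

variable {f g : V2 → ℂ} {y : V2}

lemma dirD_eq_fderiv (t : V2) : dirD t f y = fderiv ℝ f y t := by
  have ht : t = t 0 • (Pi.single 0 1 : V2) + t 1 • (Pi.single 1 1 : V2) := by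
    ext k
    fin_cases k <;> simp
  conv_rhs => rw [ht]
  simp [dirD, pd]

lemma pd_congr (h : f =ᶠ[nhds y] g) (i : Fin 2) : pd i f y = pd i g y := by
  rw [pd, pd, h.fderiv_eq]

lemma pd_neg (i : Fin 2) : pd i (fun w => -f w) y = -pd i f y := by
  simp [pd, fderiv_fun_neg]

lemma pd_add (hf : DifferentiableAt ℝ f y) (hg : DifferentiableAt ℝ g y) (i : Fin 2) :
    pd i (fun w => f w + g w) y = pd i f y + pd i g y := by
  simp [pd, fderiv_fun_add hf hg]

lemma pd_sub (hf : DifferentiableAt ℝ f y) (hg : DifferentiableAt ℝ g y) (i : Fin 2) :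
    pd i (fun w => f w - g w) y = pd i f y - pd i g y := by
  simp [pd, fderiv_fun_sub hf hg]

lemma pd_const_mul (hf : DifferentiableAt ℝ f y) (c : ℂ) (i : Fin 2) :
    pd i (fun w => c * f w) y = c * pd i f y := by
  rw [pd, fderiv_const_mul hf c]
  simp [pd]

lemma pd_comp_sub (ζ : V2) (i : Fin 2) : pd i (fun w => f (w - ζ)) y = pd i f (y - ζ) := by
  rw [pd, pd, fderiv_comp_sub]

lemma pd_comp_const_sub {w : V2} (hf : DifferentiableAt ℝ f (w - y)) (i : Fin 2) :
    pd i (fun y => f (w - y)) y = -pd i f (w - y) := by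
  have h : HasFDerivAt (fun y => f (w - y)) _ y :=
    hf.hasFDerivAt.comp y ((hasFDerivAt_id y).const_sub w)
  simp [pd, h.fderiv]

lemma dirD_congr (h : f =ᶠ[nhds y] g) (t : V2) : dirD t f y = dirD t g y := by
  rw [dirD, dirD, pd_congr h, pd_congr h]

lemma dirD_add (hf : DifferentiableAt ℝ f y) (hg : DifferentiableAt ℝ g y) (t : V2) :
    dirD t (fun w => f w + g w) y = dirD t f y + dirD t g y := by
  simp only [dirD, pd_add hf hg]
  ring

lemma dirD_const_mul (hf : DifferentiableAt ℝ f y) (c : ℂ) (t : V2) :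
    dirD t (fun w => c * f w) y = c * dirD t f y := by
  simp only [dirD, pd_const_mul hf]
  ring

lemma contDiffAt_pd {m n : WithTop ℕ∞} (hf : ContDiffAt ℝ n f y) (hmn : m + 1 ≤ n) (i : Fin 2) :
    ContDiffAt ℝ m (pd i f) y :=
  (hf.fderiv_right hmn).clm_apply contDiffAt_const

lemma contDiffAt_grad {m n : WithTop ℕ∞} (hf : ContDiffAt ℝ n f y) (hmn : m + 1 ≤ n) :
    ContDiffAt ℝ m (grad f) y :=
  contDiffAt_pi.2 fun i => contDiffAt_pd hf hmn i

lemma pd_comm (hf : ContDiffAt ℝ 2 f y) (i j : Fin 2) : pd i (pd j f) y = pd j (pd i f) y := by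
  have hd : DifferentiableAt ℝ (fderiv ℝ f) y :=
    (hf.fderiv_right (m := 1) (by norm_num)).differentiableAt one_ne_zero
  have pd_pd (k l : Fin 2) :
      pd k (pd l f) y = fderiv ℝ (fderiv ℝ f) y (Pi.single k 1) (Pi.single l 1) := by
    have h : HasFDerivAt (pd l f) _ y :=
      hd.hasFDerivAt.clm_apply (hasFDerivAt_const (Pi.single l (1 : ℝ) : V2) y)
    rw [pd, h.fderiv]
    simp
  rw [pd_pd, pd_pd, hf.isSymmSndFDerivAt (by simp)]

end PartialDerivatives

section SecondOrder

variable {f g : V2 → ℂ} {y : V2}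

lemma grad_sub (hf : DifferentiableAt ℝ f y) (hg : DifferentiableAt ℝ g y) :
    grad (fun w => f w - g w) y = grad f y - grad g y :=
  funext fun i => pd_sub hf hg i

lemma hess_isSymm (hf : ContDiffAt ℝ 2 f y) : (hess f y).IsSymm :=
  Matrix.IsSymm.ext fun i j => pd_comm hf j i

lemma trace_hess : (hess f y).trace = divV (grad f) y :=
  Matrix.trace_fin_two _

lemma hess_sub (hf : ContDiffAt ℝ 2 f y) (hg : ContDiffAt ℝ 2 g y) :
    hess (fun w => f w - g w) y = hess f y - hess g y := by
  ext i j
  have h : pd j (fun w => f w - g w) =ᶠ[nhds y] fun w => pd j f w - pd j g w := by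
    filter_upwards [hf.eventually (by simp), hg.eventually (by simp)] with w hfw hgw
    exact pd_sub (hfw.differentiableAt two_ne_zero) (hgw.differentiableAt two_ne_zero) j
  have pd_differentiableAt {h : V2 → ℂ} (hh : ContDiffAt ℝ 2 h y) : DifferentiableAt ℝ (pd j h) y :=
    (contDiffAt_pd (m := 1) hh (by norm_num) j).differentiableAt one_ne_zero
  calc pd i (pd j fun w => f w - g w) y = pd i (fun w => pd j f w - pd j g w) y := pd_congr h i
    _ = pd i (pd j f) y - pd i (pd j g) y :=
      pd_sub (pd_differentiableAt hf) (pd_differentiableAt hg) i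

lemma divV_grad_sub (hf : ContDiffAt ℝ 2 f y) (hg : ContDiffAt ℝ 2 g y) :
    divV (grad fun w => f w - g w) y = divV (grad f) y - divV (grad g) y := by
  simp only [← trace_hess, hess_sub hf hg, Matrix.trace_sub]

lemma curlV_grad (hf : ContDiffAt ℝ 2 f y) : curlV (grad f) y = 0 :=
  sub_eq_zero.2 (pd_comm hf 0 1)

lemma divV_ArotC_mulVec (v : V2 → C2) : divV (fun w => ArotC *ᵥ v w) y = -curlV v y := by
  simp only [divV, curlV, ArotC_mulVec_zero, ArotC_mulVec_one, pd_neg]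
  ring

lemma curlV_ArotC_mulVec (v : V2 → C2) : curlV (fun w => ArotC *ᵥ v w) y = divV v y := by
  simp only [divV, curlV, ArotC_mulVec_zero, ArotC_mulVec_one, pd_neg]
  ring

lemma dirV_ArotC_mulVec (t : V2) (v : V2 → C2) :
    dirV t (fun w => ArotC *ᵥ v w) y = ArotC *ᵥ dirV t v y := by
  ext i
  fin_cases i
  · simp only [Fin.zero_eta, dirV, dirD, ArotC_mulVec_zero, pd_neg]
    ring
  · simp only [Fin.mk_one, dirV, dirD, ArotC_mulVec_one]

lemma dirV_grad (hf : ContDiffAt ℝ 2 f y) (t : V2) :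
    dirV t (grad f) y = hess f y *ᵥ complexify t := by
  ext i
  simp only [dirV, dirD, grad, hess, Matrix.mulVec, dotProduct, Fin.sum_univ_two, complexify,
    Matrix.of_apply, pd_comm hf i]
  ring

lemma divV_grad_pd (hf : ContDiffAt ℝ 3 f y) (j : Fin 2) :
    divV (grad (pd j f)) y = pd j (divV (grad f)) y := by
  have pd_pd_differentiableAt (k : Fin 2) : DifferentiableAt ℝ (pd k (pd k f)) y :=
    (contDiffAt_pd (m := 1) (contDiffAt_pd (m := 2) hf (by norm_num) k)
      (by norm_num) k).differentiableAt one_ne_zero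
  have commute (k : Fin 2) : pd k (pd k (pd j f)) y = pd j (pd k (pd k f)) y := by
    have h : pd k (pd j f) =ᶠ[nhds y] pd j (pd k f) := by
      filter_upwards [hf.eventually (by simp)] with w hw
      exact pd_comm (hw.of_le (by norm_num)) k j
    rw [pd_congr h k, pd_comm (contDiffAt_pd hf (by norm_num) k) k j]
  calc divV (grad (pd j f)) y = pd j (pd 0 (pd 0 f)) y + pd j (pd 1 (pd 1 f)) y :=
        congr_arg₂ (· + ·) (commute 0) (commute 1)
    _ = pd j (divV (grad f)) y :=
        (pd_add (pd_pd_differentiableAt 0) (pd_pd_differentiableAt 1) j).symm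

end SecondOrder

section Traction

variable {lam mu : ℝ} {n : V2} {u v : V2 → C2} {y : V2}

lemma tracV_eq_rotation :
    tracV lam mu n u y = (((lam : ℂ) + 2 * mu) * divV u y) • complexify n
      + ((mu : ℂ) * curlV u y) • complexify (Arot *ᵥ n)
      + (2 * mu : ℂ) • ArotC *ᵥ dirV (Arot *ᵥ n) u y := by
  refine funext (Fin.forall_fin_two.2 ⟨?_, ?_⟩) <;>
    simp only [tracV, divV, curlV, complexify, dirV, dirD, Pi.add_apply, Pi.smul_apply,
      smul_eq_mul, Arot_mulVec_zero, Arot_mulVec_one, ArotC_mulVec_zero, ArotC_mulVec_one,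
      Complex.ofReal_neg, Matrix.cons_val_zero, Matrix.cons_val_one] <;>
    ring

/-- The value of `T_n u` at a point as a linear function of the derivative `J` of `u` at that
point. -/
def tractionMap (lam mu : ℝ) (n : V2) : (V2 →L[ℝ] C2) →ₗ[ℂ] C2 where
  toFun J i := lam * (J (Pi.single 0 1) 0 + J (Pi.single 1 1) 1) * n i
    + 2 * mu * (n 0 * J (Pi.single 0 1) i + n 1 * J (Pi.single 1 1) i)
    + mu * (J (Pi.single 0 1) 1 - J (Pi.single 1 1) 0) * (![n 1, -n 0] : V2) i
  map_add' J K := by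
    ext i
    simp only [add_apply, Pi.add_apply]
    ring
  map_smul' c J := by
    ext i
    simp only [smul_apply, Pi.smul_apply, smul_eq_mul, RingHom.id_apply]
    ring

lemma pd_apply (hu : DifferentiableAt ℝ u y) (i j : Fin 2) :
    pd j (fun w => u w i) y = fderiv ℝ u y (Pi.single j 1) i := by
  rw [pd, fderiv_apply hu]
  rfl

lemma tracV_eq_tractionMap (hu : DifferentiableAt ℝ u y) :
    tracV lam mu n u y = tractionMap lam mu n (fderiv ℝ u y) := by
  ext i
  simp only [tracV, pd_apply hu]
  rfl

lemma tracV_congr (h : u =ᶠ[nhds y] v) : tracV lam mu n u y = tracV lam mu n v y := by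
  have pd_eq (i j : Fin 2) : pd j (fun w => u w i) y = pd j (fun w => v w i) y :=
    pd_congr (h.mono fun w hw => congrFun hw i) j
  ext i
  simp only [tracV, pd_eq]

lemma tracV_add (hu : DifferentiableAt ℝ u y) (hv : DifferentiableAt ℝ v y) :
    tracV lam mu n (fun w => u w + v w) y = tracV lam mu n u y + tracV lam mu n v y := by
  rw [tracV_eq_tractionMap (hu.fun_add hv), tracV_eq_tractionMap hu, tracV_eq_tractionMap hv,
    fderiv_fun_add hu hv, map_add]

lemma tracV_const_smul (hu : DifferentiableAt ℝ u y) (c : ℂ) :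
    tracV lam mu n (fun w => c • u w) y = c • tracV lam mu n u y := by
  rw [tracV_eq_tractionMap (hu.fun_const_smul c), tracV_eq_tractionMap hu,
    fderiv_fun_const_smul hu, map_smul]

lemma tracV_comp_sub (ζ : V2) :
    tracV lam mu n (fun w => u (w - ζ)) y = tracV lam mu n u (y - ζ) := by
  ext i
  have pd_eq (i j : Fin 2) : pd j (fun w => u (w - ζ) i) y = pd j (fun w => u w i) (y - ζ) :=
    pd_comp_sub (f := fun w => u w i) ζ j
  simp only [tracV, pd_eq]

lemma tracV_grad {f : V2 → ℂ} (hf : ContDiffAt ℝ 2 f y) :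
    tracV lam mu n (grad f) y = (((lam : ℂ) + 2 * mu) * divV (grad f) y) • complexify n
      + (2 * mu : ℂ) • ArotC *ᵥ hess f y *ᵥ complexify (Arot *ᵥ n) := by
  simp only [tracV_eq_rotation, curlV_grad hf, dirV_grad hf, mul_zero, zero_smul, add_zero]

lemma tracV_rotated_grad {f : V2 → ℂ} (hf : ContDiffAt ℝ 2 f y) :
    tracV lam mu n (fun w => ArotC *ᵥ grad f w) y =
      ((mu : ℂ) * divV (grad f) y) • complexify (Arot *ᵥ n)
        - (2 * mu : ℂ) • hess f y *ᵥ complexify (Arot *ᵥ n) := by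
  simp only [tracV_eq_rotation, divV_ArotC_mulVec, curlV_ArotC_mulVec, dirV_ArotC_mulVec,
    curlV_grad hf, dirV_grad hf, ArotC_mulVec_ArotC_mulVec, neg_zero, mul_zero, zero_smul, zero_add,
    smul_neg, sub_eq_add_neg]

variable {F : V2 → Matrix (Fin 2) (Fin 2) ℂ}

lemma tracM_apply (i j : Fin 2) :
    tracM lam mu n F y i j = tracV lam mu n (fun w => (F w).col j) y i := by
  simp [tracM, tracV, Matrix.col_apply]

lemma tracM_comp_const_sub {w : V2}
    (hF : ∀ i j, DifferentiableAt ℝ (fun w => F w i j) (w - y)) :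
    tracM lam mu n (fun y => F (w - y)) y = -tracM lam mu n F (w - y) := by
  ext i j
  simp only [tracM, Matrix.of_apply, Matrix.neg_apply, Fin.sum_univ_two,
    pd_comp_const_sub (f := fun w => F w _ _) (hF _ _)]
  ring

lemma tracV_mulVec (hF : ∀ i j, DifferentiableAt ℝ (fun w => F w i j) y) (a : C2) :
    tracV lam mu n (fun w => F w *ᵥ a) y = tracM lam mu n F y *ᵥ a := by
  have col_differentiableAt (j : Fin 2) : DifferentiableAt ℝ (fun w => (F w).col j) y :=
    differentiableAt_pi.2 fun i => hF i j
  have mulVec_eq (M : Matrix (Fin 2) (Fin 2) ℂ) : M *ᵥ a = a 0 • M.col 0 + a 1 • M.col 1 := by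
    ext i
    simp [Matrix.mulVec, dotProduct, mul_comm]
  ext i
  simp only [mulVec_eq]
  rw [tracV_add ((col_differentiableAt 0).fun_const_smul _)
      ((col_differentiableAt 1).fun_const_smul _),
    tracV_const_smul (col_differentiableAt 0), tracV_const_smul (col_differentiableAt 1)]
  simp [tracM_apply, Matrix.col_apply]

end Traction

section FundamentalTensor

variable {lam mu rho om ks kp : ℝ} {U : Set V2} {γs γp : V2 → ℂ} {y : V2}

lemma IsHelmholtzOn.divV_grad {k : ℂ} {f : V2 → ℂ} (hf : IsHelmholtzOn k U f) (hy : y ∈ U) :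
    divV (grad f) y = -(k ^ 2 * f y) :=
  eq_neg_of_add_eq_zero_left (hf y hy)

lemma contDiffAt_Emat {m n : WithTop ℕ∞} (hs : ContDiffAt ℝ n γs y) (hp : ContDiffAt ℝ n γp y)
    (hmn : m + 2 ≤ n) (i j : Fin 2) :
    ContDiffAt ℝ m (fun w => Emat mu rho om γs γp w i j) y := by
  have hessian : ContDiffAt ℝ m (pd i (pd j fun w => γs w - γp w)) y :=
    contDiffAt_pd (contDiffAt_pd (hs.sub hp) (m := m + 1)
      (by rwa [add_assoc, one_add_one_eq_two]) j) le_rfl i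
  have hsm : ContDiffAt ℝ m γs y := hs.of_le (le_self_add.trans hmn)
  simp only [Emat, hess, Matrix.add_apply, Matrix.smul_apply, Matrix.of_apply, smul_eq_mul]
  fun_prop

lemma isSymm_Emat (hs : ContDiffAt ℝ 2 γs y) (hp : ContDiffAt ℝ 2 γp y) :
    (Emat mu rho om γs γp y).IsSymm :=
  (Matrix.isSymm_one.smul _).add ((hess_isSymm (hs.sub hp)).smul _)

lemma pd_Emat (hs : ContDiffAt ℝ 3 γs y) (hp : ContDiffAt ℝ 3 γp y) (i j k : Fin 2) :
    pd k (fun w => Emat mu rho om γs γp w i j) y =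
      (mu : ℂ)⁻¹ * (1 : Matrix (Fin 2) (Fin 2) ℂ) i j * pd k γs y
        + ((rho * om ^ 2 : ℝ) : ℂ)⁻¹ * pd k (pd i (pd j fun w => γs w - γp w)) y := by
  have hs_diff : DifferentiableAt ℝ γs y := hs.differentiableAt (by norm_num)
  have hess_diff : DifferentiableAt ℝ (pd i (pd j fun w => γs w - γp w)) y :=
    (contDiffAt_pd (m := 1) (contDiffAt_pd (m := 2) (hs.sub hp) (by norm_num) j)
      (by norm_num) i).differentiableAt one_ne_zero
  have entry (w : V2) : Emat mu rho om γs γp w i j =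
      (mu : ℂ)⁻¹ * (1 : Matrix (Fin 2) (Fin 2) ℂ) i j * γs w
        + ((rho * om ^ 2 : ℝ) : ℂ)⁻¹ * pd i (pd j fun w => γs w - γp w) w := by
    simp only [Emat, hess, Matrix.add_apply, Matrix.smul_apply, Matrix.of_apply, smul_eq_mul]
    ring
  simp only [entry]
  rw [pd_add (hs_diff.const_mul _) (hess_diff.const_mul _), pd_const_mul hs_diff,
    pd_const_mul hess_diff]

lemma curlV_Emat_col (hs : ContDiffAt ℝ 3 γs y) (hp : ContDiffAt ℝ 3 γp y) (j : Fin 2) :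
    curlV (fun w => (Emat mu rho om γs γp w).col j) y = (mu : ℂ)⁻¹ * (ArotC *ᵥ grad γs y) j := by
  have irrotational : curlV (grad (pd j fun w => γs w - γp w)) y = 0 :=
    curlV_grad (contDiffAt_pd (hs.sub hp) (by norm_num) j)
  simp only [curlV, grad, Matrix.col_apply, pd_Emat hs hp] at irrotational ⊢
  match j with
  | 0 =>
    rw [Matrix.one_apply_ne one_ne_zero, Matrix.one_apply_eq, ArotC_mulVec_zero, grad]
    linear_combination ((rho * om ^ 2 : ℝ) : ℂ)⁻¹ * irrotational
  | 1 =>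
    rw [Matrix.one_apply_ne zero_ne_one, Matrix.one_apply_eq, ArotC_mulVec_one, grad]
    linear_combination ((rho * om ^ 2 : ℝ) : ℂ)⁻¹ * irrotational

/-- The setting of the fundamental-type tensor `E`: `γs` and `γp` solve the Helmholtz equations for
the shear and pressure wave numbers `ks`, `kp` on the open set `U`. The wave numbers are
encoded by `μ ks² = ρω² = (λ + 2μ) kp²`. -/
structure IsElasticPotentialPair (lam mu rho om ks kp : ℝ) (U : Set V2) (γs γp : V2 → ℂ) :
    Prop where
  isOpen : IsOpen U
  contDiffOn_shear : ContDiffOn ℝ 3 γs U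
  contDiffOn_pressure : ContDiffOn ℝ 3 γp U
  helmholtz_shear : IsHelmholtzOn ks U γs
  helmholtz_pressure : IsHelmholtzOn kp U γp
  shear_modulus : mu * ks ^ 2 = rho * om ^ 2
  pressure_modulus : (lam + 2 * mu) * kp ^ 2 = rho * om ^ 2
  inertia_ne_zero : rho * om ^ 2 ≠ 0

namespace IsElasticPotentialPair

variable (h : IsElasticPotentialPair lam mu rho om ks kp U γs γp)

include h

lemma contDiffAt_shear (hy : y ∈ U) : ContDiffAt ℝ 3 γs y :=
  h.contDiffOn_shear.contDiffAt (h.isOpen.mem_nhds hy)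

lemma contDiffAt_pressure (hy : y ∈ U) : ContDiffAt ℝ 3 γp y :=
  h.contDiffOn_pressure.contDiffAt (h.isOpen.mem_nhds hy)

lemma mu_ne_zero : (mu : ℂ) ≠ 0 :=
  mod_cast left_ne_zero_of_mul (h.shear_modulus ▸ h.inertia_ne_zero)

lemma inv_mul_ks_sq : ((rho * om ^ 2 : ℝ) : ℂ)⁻¹ * (ks : ℂ) ^ 2 = (mu : ℂ)⁻¹ := by
  have hW := h.inertia_ne_zero
  rw [← h.shear_modulus] at hW ⊢
  have hmu : (mu : ℂ) ≠ 0 := mod_cast left_ne_zero_of_mul hW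
  have hks : (ks : ℂ) ≠ 0 := mod_cast pow_ne_zero_iff two_ne_zero |>.1 (right_ne_zero_of_mul hW)
  push_cast
  field_simp

lemma inv_mul_kp_sq : ((rho * om ^ 2 : ℝ) : ℂ)⁻¹ * (kp : ℂ) ^ 2 = ((lam : ℂ) + 2 * mu)⁻¹ := by
  have hW := h.inertia_ne_zero
  rw [← h.pressure_modulus] at hW ⊢
  have hlm : (lam : ℂ) + 2 * mu ≠ 0 := mod_cast left_ne_zero_of_mul hW
  have hkp : (kp : ℂ) ≠ 0 := mod_cast pow_ne_zero_iff two_ne_zero |>.1 (right_ne_zero_of_mul hW)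
  push_cast
  field_simp

lemma divV_grad_sub (hy : y ∈ U) :
    divV (grad fun w => γs w - γp w) y = (kp : ℂ) ^ 2 * γp y - (ks : ℂ) ^ 2 * γs y := by
  rw [_root_.divV_grad_sub ((h.contDiffAt_shear hy).of_le (by norm_num))
      ((h.contDiffAt_pressure hy).of_le (by norm_num)), h.helmholtz_shear.divV_grad hy,
    h.helmholtz_pressure.divV_grad hy]
  ring

lemma trace_Emat (hy : y ∈ U) :
    (Emat mu rho om γs γp y).trace = (mu : ℂ)⁻¹ * γs y + ((lam : ℂ) + 2 * mu)⁻¹ * γp y := by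
  simp only [Emat, Matrix.trace_add, Matrix.trace_smul, Matrix.trace_one, trace_hess,
    h.divV_grad_sub hy, smul_eq_mul, Fintype.card_fin, Nat.cast_ofNat]
  linear_combination γp y * h.inv_mul_kp_sq - γs y * h.inv_mul_ks_sq

lemma pd_divV_grad_sub (hy : y ∈ U) (j : Fin 2) :
    pd j (divV (grad fun w => γs w - γp w)) y =
      (kp : ℂ) ^ 2 * pd j γp y - (ks : ℂ) ^ 2 * pd j γs y := by
  have hs : DifferentiableAt ℝ γs y := (h.contDiffAt_shear hy).differentiableAt (by norm_num)
  have hp : DifferentiableAt ℝ γp y := (h.contDiffAt_pressure hy).differentiableAt (by norm_num)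
  have near : divV (grad fun w => γs w - γp w) =ᶠ[nhds y]
      fun w => (kp : ℂ) ^ 2 * γp w - (ks : ℂ) ^ 2 * γs w :=
    (h.isOpen.eventually_mem hy).mono fun w hw => h.divV_grad_sub hw
  rw [pd_congr near, pd_sub (hp.const_mul _) (hs.const_mul _), pd_const_mul hp, pd_const_mul hs]

lemma divV_Emat_col (hy : y ∈ U) (j : Fin 2) :
    divV (fun w => (Emat mu rho om γs γp w).col j) y = ((lam : ℂ) + 2 * mu)⁻¹ * grad γp y j := by
  have hs := h.contDiffAt_shear hy
  have hp := h.contDiffAt_pressure hy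
  calc divV (fun w => (Emat mu rho om γs γp w).col j) y
      = (mu : ℂ)⁻¹ * pd j γs y
          + ((rho * om ^ 2 : ℝ) : ℂ)⁻¹ * divV (grad (pd j fun w => γs w - γp w)) y := by
        simp only [divV, grad, Matrix.col_apply, pd_Emat hs hp]
        match j with
        | 0 => rw [Matrix.one_apply_ne one_ne_zero, Matrix.one_apply_eq]; ring
        | 1 => rw [Matrix.one_apply_ne zero_ne_one, Matrix.one_apply_eq]; ring
    _ = ((lam : ℂ) + 2 * mu)⁻¹ * grad γp y j := by
        rw [divV_grad_pd (hs.sub hp), h.pd_divV_grad_sub hy, grad]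
        linear_combination pd j γp y * h.inv_mul_kp_sq - pd j γs y * h.inv_mul_ks_sq

lemma tracM_Emat (hy : y ∈ U) (n : V2) :
    tracM lam mu n (Emat mu rho om γs γp) y =
      Matrix.vecMulVec (complexify n) (grad γp y)
        + Matrix.vecMulVec (complexify (Arot *ᵥ n)) (ArotC *ᵥ grad γs y)
        + (2 * mu : ℂ) • (ArotC * dirM (Arot *ᵥ n) (Emat mu rho om γs γp) y) := by
  have hlm : (lam : ℂ) + 2 * mu ≠ 0 :=
    mod_cast left_ne_zero_of_mul (h.pressure_modulus ▸ h.inertia_ne_zero)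
  ext i j
  rw [tracM_apply, tracV_eq_rotation, h.divV_Emat_col hy,
    curlV_Emat_col (h.contDiffAt_shear hy) (h.contDiffAt_pressure hy),
    mul_inv_cancel_left₀ h.mu_ne_zero, mul_inv_cancel_left₀ hlm]
  simp only [Matrix.add_apply, Matrix.smul_apply, Matrix.vecMulVec_apply, Pi.add_apply,
    Pi.smul_apply, smul_eq_mul, mul_comm (grad γp y j), mul_comm ((ArotC *ᵥ grad γs y) j)]
  rfl

lemma contDiffAt_Emat (hy : y ∈ U) (i j : Fin 2) :
    ContDiffAt ℝ 1 (fun w => Emat mu rho om γs γp w i j) y :=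
  _root_.contDiffAt_Emat (h.contDiffAt_shear hy) (h.contDiffAt_pressure hy) (by norm_num) i j

lemma contDiffOn_Emat (i j : Fin 2) :
    ContDiffOn ℝ 1 (fun w => Emat mu rho om γs γp w i j) U :=
  fun _ hy => (h.contDiffAt_Emat hy i j).contDiffWithinAt

lemma differentiableAt_Emat (hy : y ∈ U) (i j : Fin 2) :
    DifferentiableAt ℝ (fun w => Emat mu rho om γs γp w i j) y :=
  (h.contDiffAt_Emat hy i j).differentiableAt one_ne_zero

lemma isSymm_Emat (hy : y ∈ U) : (Emat mu rho om γs γp y).IsSymm :=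
  _root_.isSymm_Emat ((h.contDiffAt_shear hy).of_le (by norm_num))
    ((h.contDiffAt_pressure hy).of_le (by norm_num))

lemma isSymm_dirM_Emat (hy : y ∈ U) (t : V2) :
    (dirM t (Emat mu rho om γs γp) y).IsSymm := by
  refine Matrix.IsSymm.ext fun i j => dirD_congr ?_ t
  filter_upwards [h.isOpen.eventually_mem hy] with w hw
  exact (h.isSymm_Emat hw).apply i j

lemma trace_dirM_Emat (hy : y ∈ U) (t : V2) :
    (dirM t (Emat mu rho om γs γp) y).trace =
      (mu : ℂ)⁻¹ * dirD t γs y + ((lam : ℂ) + 2 * mu)⁻¹ * dirD t γp y := by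
  have hs : DifferentiableAt ℝ γs y := (h.contDiffAt_shear hy).differentiableAt (by norm_num)
  have hp : DifferentiableAt ℝ γp y := (h.contDiffAt_pressure hy).differentiableAt (by norm_num)
  have trace_near : (fun w => Emat mu rho om γs γp w 0 0 + Emat mu rho om γs γp w 1 1) =ᶠ[nhds y]
      fun w => (mu : ℂ)⁻¹ * γs w + ((lam : ℂ) + 2 * mu)⁻¹ * γp w := by
    filter_upwards [h.isOpen.eventually_mem hy] with w hw
    rw [← h.trace_Emat hw, Matrix.trace_fin_two]
  calc (dirM t (Emat mu rho om γs γp) y).trace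
      = dirD t (fun w => Emat mu rho om γs γp w 0 0 + Emat mu rho om γs γp w 1 1) y := by
        rw [Matrix.trace_fin_two, dirD_add (h.differentiableAt_Emat hy 0 0)
          (h.differentiableAt_Emat hy 1 1)]
        rfl
    _ = (mu : ℂ)⁻¹ * dirD t γs y + ((lam : ℂ) + 2 * mu)⁻¹ * dirD t γp y := by
        rw [dirD_congr trace_near, dirD_add (hs.const_mul _) (hp.const_mul _),
          dirD_const_mul hs, dirD_const_mul hp]

lemma transpose_tracM_Emat_mulVec {w ζ : V2} (hw : w - ζ ∈ U) (n : V2) (v : C2) :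
    (tracM lam mu n (fun y => Emat mu rho om γs γp (w - y)) ζ)ᵀ *ᵥ v =
      -(complexify n ⬝ᵥ v) • grad γp (w - ζ)
        - (complexify (Arot *ᵥ n) ⬝ᵥ v) • ArotC *ᵥ grad γs (w - ζ)
        + (2 * mu : ℂ) • dirM (Arot *ᵥ n) (Emat mu rho om γs γp) (w - ζ) *ᵥ ArotC *ᵥ v := by
  have transpose_ArotC : ArotCᵀ = -ArotC := by
    ext i j
    fin_cases i <;> fin_cases j <;> simp [ArotC]
  rw [tracM_comp_const_sub (h.differentiableAt_Emat hw), h.tracM_Emat hw]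
  simp only [Matrix.transpose_neg, Matrix.transpose_add, Matrix.transpose_smul,
    Matrix.transpose_mul, Matrix.transpose_vecMulVec, transpose_ArotC,
    (h.isSymm_dirM_Emat hw _).eq, Matrix.neg_mulVec, Matrix.add_mulVec, Matrix.smul_mulVec,
    Matrix.vecMulVec_mulVec, Matrix.mul_neg, Matrix.mulVec_mulVec, op_smul_eq_smul]
  module

end IsElasticPotentialPair

end FundamentalTensor

section ElasticField

variable {lam mu rho om ks kp : ℝ} {U : Set V2} {γs γp : V2 → ℂ} {y : V2}

/-- After an integration by parts along the boundary, the integrand of the double-layer potential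
at a boundary point with normal `n`, where the density has value `v` and derivative `v'`, is this
displacement. -/
def elasticField (mu rho om : ℝ) (γs γp : V2 → ℂ) (n : V2) (v v' : C2) (y : V2) : C2 :=
  -(complexify n ⬝ᵥ v) • grad γp y - (complexify (Arot *ᵥ n) ⬝ᵥ v) • ArotC *ᵥ grad γs y
    + (2 * mu : ℂ) • Emat mu rho om γs γp y *ᵥ ArotC *ᵥ v'

lemma tracV_elasticField (hs : ContDiffAt ℝ 3 γs y) (hp : ContDiffAt ℝ 3 γp y) (ν n : V2)
    (v v' : C2) :
    tracV lam mu ν (elasticField mu rho om γs γp n v v') y =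
      (-(complexify n ⬝ᵥ v)) • tracV lam mu ν (grad γp) y
        + (-(complexify (Arot *ᵥ n) ⬝ᵥ v)) • tracV lam mu ν (fun w => ArotC *ᵥ grad γs w) y
        + (2 * mu : ℂ) • tracM lam mu ν (Emat mu rho om γs γp) y *ᵥ ArotC *ᵥ v' := by
  have diff_p : DifferentiableAt ℝ (grad γp) y :=
    (contDiffAt_grad (m := 1) hp (by norm_num)).differentiableAt one_ne_zero
  have contDiff_s : ContDiffAt ℝ 1 (fun w => ArotC *ᵥ grad γs w) y :=
    contDiffAt_mulVec (fun _ _ => contDiffAt_const) (contDiffAt_grad hs (by norm_num))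
  have contDiff_E (i j : Fin 2) : ContDiffAt ℝ 1 (fun w => Emat mu rho om γs γp w i j) y :=
    contDiffAt_Emat hs hp (by norm_num) i j
  have contDiff_Ev : ContDiffAt ℝ 1 (fun w => Emat mu rho om γs γp w *ᵥ ArotC *ᵥ v') y :=
    contDiffAt_mulVec contDiff_E contDiffAt_const
  have diff_s := contDiff_s.differentiableAt one_ne_zero
  have diff_Ev := contDiff_Ev.differentiableAt one_ne_zero
  have split : elasticField mu rho om γs γp n v v' = fun w =>
      ((-(complexify n ⬝ᵥ v)) • grad γp w
          + (-(complexify (Arot *ᵥ n) ⬝ᵥ v)) • ArotC *ᵥ grad γs w)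
        + (2 * mu : ℂ) • Emat mu rho om γs γp w *ᵥ ArotC *ᵥ v' := by
    ext w : 1
    simp only [elasticField, sub_eq_add_neg, neg_smul]
  rw [split, tracV_add ((diff_p.fun_const_smul _).fun_add (diff_s.fun_const_smul _))
      (diff_Ev.fun_const_smul _),
    tracV_add (diff_p.fun_const_smul _) (diff_s.fun_const_smul _), tracV_const_smul diff_p,
    tracV_const_smul diff_s, tracV_const_smul diff_Ev,
    tracV_mulVec fun i j => (contDiff_E i j).differentiableAt one_ne_zero]

namespace IsElasticPotentialPair

variable (h : IsElasticPotentialPair lam mu rho om ks kp U γs γp)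

include h

lemma tracV_elasticField (hy : y ∈ U) (ν n : V2) (v v' : C2) :
    tracV lam mu ν (elasticField mu rho om γs γp n v v') y =
      (complexify n ⬝ᵥ v) • ((mu * ks ^ 2 * γp y : ℂ) • complexify ν
          - (2 * mu : ℂ) • ArotC *ᵥ hess γp y *ᵥ complexify (Arot *ᵥ ν))
        + (complexify (Arot *ᵥ n) ⬝ᵥ v) • ((mu * ks ^ 2 * γs y : ℂ) • complexify (Arot *ᵥ ν)
          + (2 * mu : ℂ) • hess γs y *ᵥ complexify (Arot *ᵥ ν))
        + (2 * mu : ℂ) • ((grad γp y ⬝ᵥ ArotC *ᵥ v') • complexify ν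
          + ((ArotC *ᵥ grad γs y) ⬝ᵥ ArotC *ᵥ v') • complexify (Arot *ᵥ ν)
          + (2 * mu : ℂ) • ArotC *ᵥ dirM (Arot *ᵥ ν) (Emat mu rho om γs γp) y *ᵥ ArotC *ᵥ v') := by
  have hs := h.contDiffAt_shear hy
  have hp := h.contDiffAt_pressure hy
  have moduli : ((lam : ℂ) + 2 * mu) * kp ^ 2 = mu * ks ^ 2 :=
    mod_cast h.pressure_modulus.trans h.shear_modulus.symm
  rw [_root_.tracV_elasticField hs hp, tracV_grad (hp.of_le (by norm_num)),
    tracV_rotated_grad (hs.of_le (by norm_num)), h.tracM_Emat hy, h.helmholtz_shear.divV_grad hy,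
    h.helmholtz_pressure.divV_grad hy]
  simp only [Matrix.add_mulVec, Matrix.smul_mulVec, Matrix.vecMulVec_mulVec, op_smul_eq_smul,
    ← Matrix.mulVec_mulVec, mul_neg, ← mul_assoc, moduli]
  module

lemma transpose_tracM_Emat_mulVec_eq_elasticField_sub {w ζ : V2} (hw : w - ζ ∈ U) (n : V2)
    (v v' : C2) :
    (tracM lam mu n (fun y => Emat mu rho om γs γp (w - y)) ζ)ᵀ *ᵥ v =
      elasticField mu rho om γs γp n v v' (w - ζ)
        - (2 * mu : ℂ) • (Emat mu rho om γs γp (w - ζ) *ᵥ ArotC *ᵥ v'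
          - dirM (Arot *ᵥ n) (Emat mu rho om γs γp) (w - ζ) *ᵥ ArotC *ᵥ v) := by
  rw [h.transpose_tracM_Emat_mulVec hw, elasticField]
  module

lemma contDiffOn_elasticField :
    ContDiffOn ℝ 1 (fun p : V2 × V2 × C2 × C2 × V2 =>
      elasticField mu rho om γs γp p.2.1 p.2.2.1 p.2.2.2.1 (p.1 - p.2.2.2.2))
      {p | p.1 - p.2.2.2.2 ∈ U} := by
  intro p hp
  have hsub : ContDiffAt ℝ 1 (fun q : V2 × V2 × C2 × C2 × V2 => q.1 - q.2.2.2.2) p := by fun_prop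
  have rotate {v : V2 × V2 × C2 × C2 × V2 → C2} (hv : ContDiffAt ℝ 1 v p) :
      ContDiffAt ℝ 1 (fun q => ArotC *ᵥ v q) p :=
    contDiffAt_mulVec (fun _ _ => contDiffAt_const) hv
  have grad_p := (contDiffAt_grad (h.contDiffAt_pressure hp) (by norm_num)).fun_comp p hsub
  have grad_s := rotate
    ((contDiffAt_grad (h.contDiffAt_shear hp) (by norm_num)).fun_comp p hsub)
  have tensor := contDiffAt_mulVec (fun i j => (h.contDiffAt_Emat hp i j).fun_comp p hsub)
    (rotate (v := fun q => q.2.2.2.1) (by fun_prop))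
  have normal : ContDiffAt ℝ 1 (fun q : V2 × V2 × C2 × C2 × V2 => complexify q.2.1) p :=
    contDiffAt_pi.2 fun i => Complex.ofRealCLM.contDiff.contDiffAt.fun_comp p (by fun_prop)
  have tangent := rotate normal
  simp only [elasticField, complexify_Arot_mulVec, dotProduct, Fin.sum_univ_two]
  refine ContDiffAt.contDiffWithinAt ?_
  fun_prop

end IsElasticPotentialPair

end ElasticField

section BoundaryMatrix

variable {lam mu rho om ks kp : ℝ} {U : Set V2} {γs γp : V2 → ℂ} {y : V2}

/-- The matrix field `M` whose total derivative along the curve turns the traction of the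
double-layer kernel into the regularized kernel, for `p = ∇γs` and `q = ∇(γs − γp)`. -/
def boundaryMatrix (ν : V2) (p q : C2) : Matrix (Fin 2) (Fin 2) ℂ :=
  Matrix.vecMulVec (complexify ν) (ArotC *ᵥ p) - Matrix.vecMulVec (complexify (Arot *ᵥ ν)) p
    + (2 * (complexify (Arot *ᵥ ν) ⬝ᵥ p)) • 1 + Matrix.vecMulVec (ArotC *ᵥ q) (complexify ν)

lemma boundaryMatrix_mulVec (ν : V2) (p q v : C2) :
    boundaryMatrix ν p q *ᵥ v =
      ((ArotC *ᵥ p) ⬝ᵥ v) • complexify ν - (p ⬝ᵥ v) • complexify (Arot *ᵥ ν)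
        + (2 * (complexify (Arot *ᵥ ν) ⬝ᵥ p)) • v + (complexify ν ⬝ᵥ v) • ArotC *ᵥ q := by
  simp only [boundaryMatrix, Matrix.add_mulVec, Matrix.sub_mulVec, Matrix.smul_mulVec,
    Matrix.one_mulVec, Matrix.vecMulVec_mulVec, op_smul_eq_smul]

lemma dirM_boundaryMatrix {p q : V2 → C2} (hp : DifferentiableAt ℝ p y)
    (hq : DifferentiableAt ℝ q y) (ν t : V2) :
    dirM t (fun w => boundaryMatrix ν (p w) (q w)) y =
      boundaryMatrix ν (dirV t p y) (dirV t q y) := by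
  have hp' := differentiableAt_pi.1 hp
  have hq' := differentiableAt_pi.1 hq
  have pd_mul_const {f : V2 → ℂ} (hf : DifferentiableAt ℝ f y) (c : ℂ) (k : Fin 2) :
      pd k (fun w => f w * c) y = pd k f y * c := by
    simp only [mul_comm _ c, pd_const_mul hf]
  ext i j
  simp only [dirM, boundaryMatrix, Matrix.of_apply, Matrix.add_apply, Matrix.sub_apply,
    Matrix.smul_apply, Matrix.vecMulVec_apply, smul_eq_mul, dotProduct, Fin.sum_univ_two, dirD]
  match i, j with
  | 0, 0 | 0, 1 | 1, 0 | 1, 1 =>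
    simp (disch := fun_prop) only [ArotC_mulVec_zero, ArotC_mulVec_one, dirV, dirD, pd_add, pd_sub,
      pd_neg, pd_const_mul, pd_mul_const]
    ring

lemma ArotC_mulVec_dotProduct (p v : C2) : (ArotC *ᵥ p) ⬝ᵥ v = -(p ⬝ᵥ ArotC *ᵥ v) := by
  simp only [dotProduct, Fin.sum_univ_two, ArotC_mulVec_zero, ArotC_mulVec_one]
  ring

lemma dotProduct_smul_ArotC_mulVec (a b c : C2) :
    (b ⬝ᵥ c) • ArotC *ᵥ a = (a ⬝ᵥ c) • ArotC *ᵥ b - (a ⬝ᵥ ArotC *ᵥ b) • c := by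
  refine funext (Fin.forall_fin_two.2 ⟨?_, ?_⟩) <;>
    simp only [dotProduct, Fin.sum_univ_two, ArotC_mulVec_zero, ArotC_mulVec_one, Pi.sub_apply,
      Pi.smul_apply, smul_eq_mul] <;>
    ring

lemma dotProduct_smul_add_rotated (a b c : C2) :
    (b ⬝ᵥ c) • a + ((ArotC *ᵥ b) ⬝ᵥ c) • ArotC *ᵥ a =
      (a ⬝ᵥ b) • c + (a ⬝ᵥ ArotC *ᵥ b) • ArotC *ᵥ c := by
  refine funext (Fin.forall_fin_two.2 ⟨?_, ?_⟩) <;>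
    simp only [dotProduct, Fin.sum_univ_two, ArotC_mulVec_zero, ArotC_mulVec_one, Pi.add_apply,
      Pi.smul_apply, smul_eq_mul] <;>
    ring

lemma trace_smul_ArotC_mulVec {S : Matrix (Fin 2) (Fin 2) ℂ} (hS : S.IsSymm) (a b c : C2) :
    (S.trace * (a ⬝ᵥ ArotC *ᵥ b)) • ArotC *ᵥ c =
      (S *ᵥ ArotC *ᵥ b ⬝ᵥ c) • ArotC *ᵥ a - ((ArotC *ᵥ S *ᵥ ArotC *ᵥ b) ⬝ᵥ c) • a
        - (2 * (ArotC *ᵥ a ⬝ᵥ S *ᵥ ArotC *ᵥ b)) • c - (b ⬝ᵥ c) • ArotC *ᵥ S *ᵥ ArotC *ᵥ a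
        + (ArotC *ᵥ b ⬝ᵥ c) • S *ᵥ ArotC *ᵥ a := by
  have h10 : S 1 0 = S 0 1 := hS.apply 0 1
  have mulVec_apply (w : C2) (i : Fin 2) : (S *ᵥ w) i = S i 0 * w 0 + S i 1 * w 1 := by
    simp [Matrix.mulVec, dotProduct]
  refine funext (Fin.forall_fin_two.2 ⟨?_, ?_⟩) <;>
    simp only [Matrix.trace_fin_two, dotProduct, Fin.sum_univ_two, ArotC_mulVec_zero,
      ArotC_mulVec_one, mulVec_apply, Pi.add_apply, Pi.sub_apply, Pi.smul_apply, smul_eq_mul,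
      h10] <;>
    ring

namespace IsElasticPotentialPair

variable (h : IsElasticPotentialPair lam mu rho om ks kp U γs γp)

include h

lemma grad_sub (hy : y ∈ U) : grad (fun w => γs w - γp w) y = grad γs y - grad γp y :=
  _root_.grad_sub ((h.contDiffAt_shear hy).differentiableAt (by norm_num))
    ((h.contDiffAt_pressure hy).differentiableAt (by norm_num))

lemma hess_sub (hy : y ∈ U) : hess (fun w => γs w - γp w) y = hess γs y - hess γp y :=
  _root_.hess_sub ((h.contDiffAt_shear hy).of_le (by norm_num))
    ((h.contDiffAt_pressure hy).of_le (by norm_num))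

lemma regularized_deriv_terms (hy : y ∈ U) (ν : V2) (v : C2) :
    -(4 * mu ^ 2 : ℂ) • dirM (Arot *ᵥ ν) (Emat mu rho om γs γp) y *ᵥ v
        + (4 * mu ^ 2 / (lam + 2 * mu) * dirD (Arot *ᵥ ν) γp y : ℂ) • v
        + (2 * mu : ℂ) • (grad (fun w => γs w - γp w) y ⬝ᵥ ArotC *ᵥ v) • complexify ν
        - (2 * mu : ℂ) • (complexify ν ⬝ᵥ v) • ArotC *ᵥ grad (fun w => γs w - γp w) y
        + (2 * mu : ℂ) •
          boundaryMatrix ν (grad γs y) (grad (fun w => γs w - γp w) y) *ᵥ v =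
      -(2 * mu : ℂ) • ((grad γp y ⬝ᵥ ArotC *ᵥ v) • complexify ν
        + ((ArotC *ᵥ grad γs y) ⬝ᵥ ArotC *ᵥ v) • complexify (Arot *ᵥ ν)
        + (2 * mu : ℂ) • ArotC *ᵥ dirM (Arot *ᵥ ν) (Emat mu rho om γs γp) y *ᵥ ArotC *ᵥ v) := by
  have conjugation := congr_arg (· *ᵥ v) (ArotC_mul_mul_ArotC (h.isSymm_dirM_Emat hy (Arot *ᵥ ν)))
  simp only [← Matrix.mulVec_mulVec, Matrix.sub_mulVec, Matrix.smul_mulVec, Matrix.one_mulVec,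
    h.trace_dirM_Emat hy] at conjugation
  have hmu := h.mu_ne_zero
  have dirD_eq : complexify (Arot *ᵥ ν) ⬝ᵥ grad γs y = dirD (Arot *ᵥ ν) γs y := Fin.sum_univ_two _
  rw [conjugation, boundaryMatrix_mulVec, dirD_eq, h.grad_sub hy, sub_dotProduct,
    ArotC_mulVec_dotProduct _ v, ArotC_mulVec_dotProduct _ (ArotC *ᵥ v), ArotC_mulVec_ArotC_mulVec,
    dotProduct_neg]
  match_scalars <;> field_simp <;> ring

lemma mul_ks_sq_smul_Emat (hy : y ∈ U) :
    (mu * ks ^ 2 : ℂ) • Emat mu rho om γs γp y =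
      (ks ^ 2 * γs y : ℂ) • (1 : Matrix (Fin 2) (Fin 2) ℂ) + (hess γs y - hess γp y) := by
  have hmu := mul_inv_cancel₀ h.mu_ne_zero
  rw [Emat, h.hess_sub hy]
  linear_combination (norm := module)
    ((ks : ℂ) ^ 2 * γs y * hmu) • (1 : Matrix (Fin 2) (Fin 2) ℂ)
      + (mu * h.inv_mul_ks_sq + hmu) • (hess γs y - hess γp y)

lemma regularized_density_terms (hy : y ∈ U) (ν n : V2) (v : C2) :
    (mu * ks ^ 2 : ℂ) • (((γs y - γp y) * (complexify n ⬝ᵥ v)) • complexify ν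
          - ((complexify ν ⬝ᵥ complexify n) * γs y) • v
          - ((complexify ν ⬝ᵥ complexify (Arot *ᵥ n)) * γs y) • ArotC *ᵥ v)
        + (2 * mu ^ 2 * ks ^ 2 * (complexify ν ⬝ᵥ complexify (Arot *ᵥ n)) : ℂ) •
          ArotC *ᵥ Emat mu rho om γs γp y *ᵥ v
        - (2 * mu : ℂ) • boundaryMatrix ν (hess γs y *ᵥ complexify (Arot *ᵥ n))
          (hess (fun w => γs w - γp w) y *ᵥ complexify (Arot *ᵥ n)) *ᵥ v =
      -(complexify n ⬝ᵥ v) • ((mu * ks ^ 2 * γp y : ℂ) • complexify ν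
          - (2 * mu : ℂ) • ArotC *ᵥ hess γp y *ᵥ complexify (Arot *ᵥ ν))
        - (complexify (Arot *ᵥ n) ⬝ᵥ v) • ((mu * ks ^ 2 * γs y : ℂ) • complexify (Arot *ᵥ ν)
          + (2 * mu : ℂ) • hess γs y *ᵥ complexify (Arot *ᵥ ν)) := by
  have helmholtz : (mu * ks ^ 2 * γs y : ℂ) = -(mu * (hess γs y).trace) := by
    rw [trace_hess, h.helmholtz_shear.divV_grad hy]
    ring
  have cyclic := dotProduct_smul_ArotC_mulVec (complexify ν) (complexify n) v
  have cyclic_hess (H : Matrix (Fin 2) (Fin 2) ℂ) := congr_arg (ArotC *ᵥ H *ᵥ ·) cyclic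
  have rotated := dotProduct_smul_add_rotated (complexify ν) (complexify n) v
  have shear := trace_smul_ArotC_mulVec
    (hess_isSymm ((h.contDiffAt_shear hy).of_le (by norm_num))) (complexify ν) (complexify n) v
  have tensor := congr_arg (ArotC *ᵥ · *ᵥ v) (h.mul_ks_sq_smul_Emat hy)
  simp only [Matrix.add_mulVec, Matrix.sub_mulVec, Matrix.smul_mulVec, Matrix.one_mulVec,
    Matrix.mulVec_add, Matrix.mulVec_sub, Matrix.mulVec_smul] at cyclic_hess tensor
  simp only [complexify_Arot_mulVec, boundaryMatrix_mulVec, h.hess_sub hy, Matrix.sub_mulVec,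
    Matrix.mulVec_sub]
  linear_combination (norm := module)
    (2 * mu * (complexify ν ⬝ᵥ ArotC *ᵥ complexify n) : ℂ) • tensor
      + (mu * ks ^ 2 * γs y : ℂ) • rotated
      + helmholtz • ((2 * (complexify ν ⬝ᵥ ArotC *ᵥ complexify n) : ℂ) • ArotC *ᵥ v)
      - (2 * mu : ℂ) • shear
      + (2 * mu : ℂ) • cyclic_hess (hess γs y) - (2 * mu : ℂ) • cyclic_hess (hess γp y)

end IsElasticPotentialPair

end BoundaryMatrix

section TotalDerivative

variable {U : Set V2} {z z' : ℝ → V2} {x : V2} {a b : ℝ} {F : V2 → Matrix (Fin 2) (Fin 2) ℂ}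
  {v v' : ℝ → C2}

lemma hasDerivAt_mulVec_comp_const_sub {s : ℝ}
    (hF : ∀ i j, DifferentiableAt ℝ (fun y => F y i j) (x - z s)) (hz : HasDerivAt z (z' s) s)
    (hv : HasDerivAt v (v' s) s) :
    HasDerivAt (fun s => F (x - z s) *ᵥ v s)
      (F (x - z s) *ᵥ v' s - dirM (z' s) F (x - z s) *ᵥ v s) s := by
  have entry (i j : Fin 2) :
      HasDerivAt (fun s => F (x - z s) i j) (-dirM (z' s) F (x - z s) i j) s := by
    rw [dirM, Matrix.of_apply, dirD_eq_fderiv, ← map_neg]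
    exact (hF i j).hasFDerivAt.comp_hasDerivAt s (hz.const_sub x)
  refine hasDerivAt_pi.2 fun i => ?_
  have row : HasDerivAt (fun s => (F (x - z s) *ᵥ v s) i) _ s :=
    HasDerivAt.fun_sum (u := Finset.univ) fun j _ => (entry i j).fun_mul (hasDerivAt_pi.1 hv j)
  refine row.congr_deriv ?_
  simp only [Pi.sub_apply, Matrix.mulVec, dotProduct, ← Finset.sum_sub_distrib]
  exact Finset.sum_congr rfl fun j _ => by ring

variable (hU : IsOpen U) (hF : ∀ i j, ContDiffOn ℝ 1 (fun y => F y i j) U)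
  (hz : ∀ s, HasDerivAt z (z' s) s) (hz' : Continuous z') (hv : ∀ s, HasDerivAt v (v' s) s)
  (hv' : Continuous v') (hx : ∀ s ∈ Set.uIcc a b, x - z s ∈ U)

include hU hF hz hz' hv hv' hx

lemma continuousOn_deriv_mulVec_comp_const_sub :
    ContinuousOn (fun s => F (x - z s) *ᵥ v' s - dirM (z' s) F (x - z s) *ᵥ v s)
      (Set.uIcc a b) := by
  have hz_cont : Continuous z := continuous_iff_continuousAt.2 fun s => (hz s).continuousAt
  have hv_cont : Continuous v := continuous_iff_continuousAt.2 fun s => (hv s).continuousAt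
  have hy : ContinuousOn (fun s => x - z s) (Set.uIcc a b) := by fun_prop
  have F_cont (i j : Fin 2) : ContinuousOn (fun s => F (x - z s) i j) (Set.uIcc a b) :=
    (hF i j).continuousOn.comp hy hx
  have dirM_cont (i j : Fin 2) :
      ContinuousOn (fun s => dirM (z' s) F (x - z s) i j) (Set.uIcc a b) := by
    simp only [dirM, Matrix.of_apply, dirD_eq_fderiv]
    exact (((hF i j).continuousOn_fderiv_of_isOpen hU le_rfl).comp hy hx).clm_apply
      hz'.continuousOn
  refine continuousOn_pi.2 fun i => ?_
  have F_mul (j : Fin 2) := (F_cont i j).fun_mul (continuous_pi_iff.1 hv' j).continuousOn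
  have dirM_mul (j : Fin 2) := (dirM_cont i j).fun_mul (continuous_pi_iff.1 hv_cont j).continuousOn
  exact (continuousOn_finsetSum Finset.univ fun j _ => F_mul j).fun_sub
    (continuousOn_finsetSum Finset.univ fun j _ => dirM_mul j)

lemma integral_deriv_mulVec_comp_const_sub (hz_closed : z a = z b) (hv_closed : v a = v b) :
    ∫ s in a..b, (F (x - z s) *ᵥ v' s - dirM (z' s) F (x - z s) *ᵥ v s) = 0 := by
  rw [intervalIntegral.integral_eq_sub_of_hasDerivAt
    (fun s hs => hasDerivAt_mulVec_comp_const_sub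
      (fun i j => ((hF i j).contDiffAt (hU.mem_nhds (hx s hs))).differentiableAt one_ne_zero)
      (hz s) (hv s))
    (continuousOn_deriv_mulVec_comp_const_sub hU hF hz hz' hv hv' hx).intervalIntegrable,
    hz_closed, hv_closed, sub_self]

end TotalDerivative

section DifferentiationUnderIntegral

variable {H P G : Type*} [NormedAddCommGroup H] [NormedSpace ℝ H] [NormedAddCommGroup P]
  [NormedSpace ℝ P] [NormedAddCommGroup G] [NormedSpace ℝ G] {Φ : H × P → G} {O : Set (H × P)}
  {c : ℝ → P} {a b : ℝ} {x : H}

lemma continuousOn_fderiv_comp_inl (hO : IsOpen O) (hΦ : ContDiffOn ℝ 1 Φ O) (hc : Continuous c)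
    (hx : ∀ s ∈ Set.uIcc a b, (x, c s) ∈ O) :
    ContinuousOn (fun s => (fderiv ℝ Φ (x, c s)).comp (.inl ℝ H P)) (Set.uIcc a b) :=
  ((hΦ.continuousOn_fderiv_of_isOpen hO le_rfl).comp (by fun_prop) hx).clm_comp continuousOn_const

lemma exists_nhds_forall_norm_fderiv_comp_inl_le (hO : IsOpen O) (hΦ : ContDiffOn ℝ 1 Φ O)
    (hc : Continuous c) (hx : ∀ s ∈ Set.uIcc a b, (x, c s) ∈ O) :
    ∃ V ∈ nhds x, ∃ C : ℝ, ∀ w ∈ V, ∀ s ∈ Set.uIcc a b,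
      (w, c s) ∈ O ∧ ‖(fderiv ℝ Φ (w, c s)).comp (.inl ℝ H P)‖ ≤ C := by
  obtain ⟨M, hM⟩ := isCompact_uIcc.exists_bound_of_continuousOn
    (continuousOn_fderiv_comp_inl hO hΦ hc hx)
  have partial_cont : ContinuousOn (fun p => ‖(fderiv ℝ Φ p).comp (.inl ℝ H P)‖) O :=
    ((hΦ.continuousOn_fderiv_of_isOpen hO le_rfl).clm_comp continuousOn_const).norm
  have fiber_subset : {x} ×ˢ (c '' Set.uIcc a b) ⊆
      O ∩ (fun p => ‖(fderiv ℝ Φ p).comp (.inl ℝ H P)‖) ⁻¹' Set.Iio (M + 1) := by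
    rintro ⟨_, _⟩ ⟨rfl, s, hs, rfl⟩
    exact ⟨hx s hs, (hM s hs).trans_lt (lt_add_one M)⟩
  obtain ⟨V, W, hV, -, hxV, hW, hVW⟩ := generalized_tube_lemma isCompact_singleton
    (isCompact_uIcc.image hc) (partial_cont.isOpen_inter_preimage hO isOpen_Iio) fiber_subset
  refine ⟨V, hV.mem_nhds (hxV rfl), M + 1, fun w hw s hs => ?_⟩
  obtain ⟨mem, bound⟩ := hVW (Set.mk_mem_prod hw (hW (Set.mem_image_of_mem c hs)))
  exact ⟨mem, bound.le⟩

lemma hasFDerivAt_intervalIntegral_of_contDiffOn (hO : IsOpen O) (hΦ : ContDiffOn ℝ 1 Φ O)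
    (hc : Continuous c) (hx : ∀ s ∈ Set.uIcc a b, (x, c s) ∈ O) :
    HasFDerivAt (fun w => ∫ s in a..b, Φ (w, c s))
      (∫ s in a..b, (fderiv ℝ Φ (x, c s)).comp (.inl ℝ H P)) x := by
  obtain ⟨V, hV, C, tube⟩ := exists_nhds_forall_norm_fderiv_comp_inl_le hO hΦ hc hx
  have integrable {w : H} (hw : w ∈ V) :
      IntervalIntegrable (fun s => Φ (w, c s)) MeasureTheory.volume a b :=
    (hΦ.continuousOn.comp (by fun_prop) fun s hs => (tube w hw s hs).1).intervalIntegrable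
  refine intervalIntegral.hasFDerivAt_integral_of_dominated_of_fderiv_le
    (F' := fun w s => (fderiv ℝ Φ (w, c s)).comp (.inl ℝ H P)) (bound := fun _ => C) hV
    (Filter.eventually_of_mem hV fun w hw => (integrable hw).aestronglyMeasurable_restrict_uIoc)
    (integrable (mem_of_mem_nhds hV)) ?_ (.of_forall fun s hs w hw => ?_) intervalIntegrable_const
    (.of_forall fun s hs w hw => ?_)
  · exact (continuousOn_fderiv_comp_inl hO hΦ hc
      hx).intervalIntegrable.aestronglyMeasurable_restrict_uIoc
  · exact (tube w hw s (Set.uIoc_subset_uIcc hs)).2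
  · have hΦw := hΦ.contDiffAt (hO.mem_nhds (tube w hw s (Set.uIoc_subset_uIcc hs)).1)
    exact (hΦw.differentiableAt one_ne_zero).hasFDerivAt.comp w (hasFDerivAt_prodMk_left w (c s))

lemma intervalIntegral_apply {ι : Type*} [Fintype ι] {f : ℝ → ι → ℂ}
    (hf : IntervalIntegrable f MeasureTheory.volume a b) (i : ι) :
    (∫ s in a..b, f s) i = ∫ s in a..b, f s i :=
  ((ContinuousLinearMap.proj (R := ℝ) i).intervalIntegral_comp_comm hf).symm

lemma tracV_intervalIntegral {lam mu : ℝ} {Φ : V2 × P → C2} {O : Set (V2 × P)} {x n : V2}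
    (hO : IsOpen O) (hΦ : ContDiffOn ℝ 1 Φ O) (hc : Continuous c)
    (hx : ∀ s ∈ Set.uIcc a b, (x, c s) ∈ O) (i : Fin 2) :
    tracV lam mu n (fun w => ∫ s in a..b, Φ (w, c s)) x i =
      ∫ s in a..b, tracV lam mu n (fun w => Φ (w, c s)) x i := by
  have slice {s : ℝ} (hs : s ∈ Set.uIcc a b) : HasFDerivAt (fun w => Φ (w, c s)) _ x :=
    ((hΦ.contDiffAt (hO.mem_nhds (hx s hs))).differentiableAt one_ne_zero).hasFDerivAt.comp x
      (hasFDerivAt_prodMk_left x (c s))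
  have total := hasFDerivAt_intervalIntegral_of_contDiffOn hO hΦ hc hx
  let traction_i := ((LinearMap.proj i ∘ₗ tractionMap lam mu n).restrictScalars
    ℝ).toContinuousLinearMap
  rw [tracV_eq_tractionMap total.differentiableAt, total.fderiv]
  calc traction_i (∫ s in a..b, (fderiv ℝ Φ (x, c s)).comp (.inl ℝ V2 P))
      = ∫ s in a..b, traction_i ((fderiv ℝ Φ (x, c s)).comp (.inl ℝ V2 P)) :=
        (traction_i.intervalIntegral_comp_comm
          (continuousOn_fderiv_comp_inl hO hΦ hc hx).intervalIntegrable).symm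
    _ = ∫ s in a..b, tracV lam mu n (fun w => Φ (w, c s)) x i :=
        intervalIntegral.integral_congr fun s hs => by
          simp only [tracV_eq_tractionMap (slice hs).differentiableAt, (slice hs).fderiv]
          rfl

end DifferentiationUnderIntegral

section DoubleLayer

variable {lam mu rho om ks kp : ℝ} {U : Set V2} {γs γp : V2 → ℂ} {n z : ℝ → V2} {u u' : ℝ → C2}
  {a b : ℝ} {x : V2}

/-- The elastic double-layer potential `D(w) = ∫ₐᵇ (T_y E(w − y))ᵀ u ds` of the path `y = z(s)` with
normal field `n`. -/
def doubleLayer (lam mu rho om : ℝ) (γs γp : V2 → ℂ) (z n : ℝ → V2) (u : ℝ → C2) (a b : ℝ)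
    (w : V2) : C2 := fun i =>
  ∫ s in a..b, ∑ j, tracM lam mu (n s) (fun y => Emat mu rho om γs γp (w - y)) (z s) j i * u s j

lemma hasDerivAt_ArotC_mulVec {s : ℝ} (hu : HasDerivAt u (u' s) s) :
    HasDerivAt (fun s => ArotC *ᵥ u s) (ArotC *ᵥ u' s) s := by
  refine hasDerivAt_pi.2 (Fin.forall_fin_two.2 ⟨?_, ?_⟩)
  · simpa only [ArotC_mulVec_zero] using (hasDerivAt_pi.1 hu 1).fun_neg
  · simpa only [ArotC_mulVec_one] using hasDerivAt_pi.1 hu 0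

namespace IsElasticPotentialPair

variable (h : IsElasticPotentialPair lam mu rho om ks kp U γs γp)

include h

variable (hz : ∀ s, HasDerivAt z (Arot *ᵥ n s) s) (hn : Continuous n)
  (hu : ∀ s, HasDerivAt u (u' s) s) (hu' : Continuous u') (hz_closed : z a = z b)
  (hu_closed : u a = u b) (hx : ∀ s ∈ Set.uIcc a b, x - z s ∈ U)

include hz hn hu hu' hz_closed hu_closed hx

lemma doubleLayer_eq_integral_elasticField :
    doubleLayer lam mu rho om γs γp z n u a b x =
      ∫ s in a..b, elasticField mu rho om γs γp (n s) (u s) (u' s) (x - z s) := by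
  have hz_cont : Continuous z := continuous_iff_continuousAt.2 fun s => (hz s).continuousAt
  have hu_cont : Continuous u := continuous_iff_continuousAt.2 fun s => (hu s).continuousAt
  have ht : Continuous fun s => Arot *ᵥ n s := by fun_prop
  have hAu (s : ℝ) := hasDerivAt_ArotC_mulVec (hu s)
  have hAu' : Continuous fun s => ArotC *ᵥ u' s := by fun_prop
  have field : IntervalIntegrable
      (fun s => elasticField mu rho om γs γp (n s) (u s) (u' s) (x - z s))
      MeasureTheory.volume a b :=
    (h.contDiffOn_elasticField.continuousOn.comp (f := fun s => (x, n s, u s, u' s, z s))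
      (by fun_prop) hx).intervalIntegrable
  have total := ((continuousOn_deriv_mulVec_comp_const_sub h.isOpen h.contDiffOn_Emat hz ht hAu hAu'
    hx).fun_const_smul (2 * mu : ℂ)).intervalIntegrable (μ := MeasureTheory.volume)
  calc doubleLayer lam mu rho om γs γp z n u a b x
      = ∫ s in a..b, (elasticField mu rho om γs γp (n s) (u s) (u' s) (x - z s)
          - (2 * mu : ℂ) • (Emat mu rho om γs γp (x - z s) *ᵥ ArotC *ᵥ u' s
            - dirM (Arot *ᵥ n s) (Emat mu rho om γs γp) (x - z s) *ᵥ ArotC *ᵥ u s)) := by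
        ext i
        rw [intervalIntegral_apply (field.sub total)]
        exact intervalIntegral.integral_congr fun s hs =>
          congrFun (h.transpose_tracM_Emat_mulVec_eq_elasticField_sub (hx s hs) (n s) (u s)
            (u' s)) i
    _ = _ := by
        rw [intervalIntegral.integral_sub field total, intervalIntegral.integral_smul,
          integral_deriv_mulVec_comp_const_sub h.isOpen h.contDiffOn_Emat hz ht hAu hAu' hx
            hz_closed (by simp only [hu_closed]), smul_zero, sub_zero]

lemma tracV_doubleLayer (ν : V2) (i : Fin 2) :
    tracV lam mu ν (doubleLayer lam mu rho om γs γp z n u a b) x i =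
      ∫ s in a..b,
        tracV lam mu ν (elasticField mu rho om γs γp (n s) (u s) (u' s)) (x - z s) i := by
  have hz_cont : Continuous z := continuous_iff_continuousAt.2 fun s => (hz s).continuousAt
  have hu_cont : Continuous u := continuous_iff_continuousAt.2 fun s => (hu s).continuousAt
  have avoids : ∀ᶠ w in nhds x, ∀ s ∈ Set.uIcc a b, w - z s ∈ U := by
    refine isCompact_uIcc.eventually_forall_of_forall_eventually fun s hs => ?_
    have hsub : Continuous fun q : V2 × ℝ => q.1 - z q.2 := by fun_prop
    exact hsub.continuousAt.eventually (h.isOpen.mem_nhds (hx s hs))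
  have hO : IsOpen {p : V2 × V2 × C2 × C2 × V2 | p.1 - p.2.2.2.2 ∈ U} :=
    h.isOpen.preimage (by fun_prop)
  have hc : Continuous fun s => (n s, u s, u' s, z s) := by fun_prop
  rw [tracV_congr (avoids.mono fun w hw =>
      h.doubleLayer_eq_integral_elasticField hz hn hu hu' hz_closed hu_closed hw),
    tracV_intervalIntegral hO h.contDiffOn_elasticField hc hx]
  simp only [tracV_comp_sub]

end IsElasticPotentialPair

end DoubleLayer

section Regularization

variable {lam mu rho om ks kp : ℝ} {U : Set V2} {γs γp : V2 → ℂ}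

lemma continuousOn_dirD {f : V2 → ℂ} (hU : IsOpen U) (hf : ContDiffOn ℝ 1 f U) (t : V2) :
    ContinuousOn (dirD t f) U := by
  refine ContinuousOn.congr ?_ fun y _ => dirD_eq_fderiv t
  exact (hf.continuousOn_fderiv_of_isOpen hU le_rfl).clm_apply continuousOn_const

lemma contDiffOn_boundaryMatrix {H : Type*} [NormedAddCommGroup H] [NormedSpace ℝ H] {S : Set H}
    {p q : H → C2} {m : WithTop ℕ∞} (hp : ContDiffOn ℝ m p S) (hq : ContDiffOn ℝ m q S) (ν : V2)
    (i j : Fin 2) : ContDiffOn ℝ m (fun w => boundaryMatrix ν (p w) (q w) i j) S := by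
  simp only [boundaryMatrix, Matrix.add_apply, Matrix.sub_apply, Matrix.smul_apply, smul_eq_mul,
    Matrix.vecMulVec_apply, Matrix.mulVec, dotProduct, Fin.sum_univ_two]
  fun_prop

/-- The six integrands of the regularized representation of `−T_ν D`, in the order of the theorem
and with their coefficients, at a boundary point with normal `n` where the density has value `v` and
derivative `v'`; `y` is the observation point minus the boundary point. -/
def regularizedTerms (lam mu rho om ks : ℝ) (γs γp : V2 → ℂ) (ν n : V2) (v v' : C2) (y : V2) :
    Fin 6 → C2 :=
  ![((mu * ks ^ 2 : ℝ) : ℂ) • ((γs y - γp y) • Matrix.vecMulVec (complexify ν) (complexify n)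
      - (((ν ⬝ᵥ n : ℝ) : ℂ) * γs y) • 1 - (((ν ⬝ᵥ Arot *ᵥ n : ℝ) : ℂ) * γs y) • ArotC) *ᵥ v,
    ((2 * mu ^ 2 * ks ^ 2 : ℝ) : ℂ) •
      ((ν ⬝ᵥ Arot *ᵥ n : ℝ) : ℂ) • (ArotC * Emat mu rho om γs γp y) *ᵥ v,
    -((4 * mu ^ 2 : ℝ) : ℂ) • dirM (Arot *ᵥ ν) (Emat mu rho om γs γp) y *ᵥ v',
    ((4 * mu ^ 2 / (lam + 2 * mu) : ℝ) : ℂ) • dirD (Arot *ᵥ ν) γp y • v',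
    ((2 * mu : ℝ) : ℂ) • (grad (fun w => γs w - γp w) y ⬝ᵥ ArotC *ᵥ v') • complexify ν,
    -((2 * mu : ℝ) : ℂ) • (complexify ν ⬝ᵥ v') • ArotC *ᵥ grad (fun w => γs w - γp w) y]

namespace IsElasticPotentialPair

variable (h : IsElasticPotentialPair lam mu rho om ks kp U γs γp)

include h

lemma continuousOn_Emat : ContinuousOn (Emat mu rho om γs γp) U :=
  continuousOn_pi.2 fun i => continuousOn_pi.2 fun j => (h.contDiffOn_Emat i j).continuousOn

lemma continuousOn_dirM_Emat (t : V2) : ContinuousOn (dirM t (Emat mu rho om γs γp)) U :=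
  continuousOn_pi.2 fun i => continuousOn_pi.2 fun j =>
    continuousOn_dirD h.isOpen (h.contDiffOn_Emat i j) t

lemma contDiffOn_grad_shear : ContDiffOn ℝ 1 (grad γs) U := fun _ hy =>
  (contDiffAt_grad (h.contDiffAt_shear hy) (by norm_num)).contDiffWithinAt

lemma contDiffOn_grad_sub : ContDiffOn ℝ 1 (grad fun w => γs w - γp w) U := fun _ hy =>
  (contDiffAt_grad ((h.contDiffAt_shear hy).sub (h.contDiffAt_pressure hy))
    (by norm_num)).contDiffWithinAt

lemma neg_tracV_elasticField {y : V2} (hy : y ∈ U) (ν n : V2) (v v' : C2) :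
    -tracV lam mu ν (elasticField mu rho om γs γp n v v') y =
      ∑ k, regularizedTerms lam mu rho om ks γs γp ν n v v' y k
        + (2 * mu : ℂ) • (boundaryMatrix ν (grad γs y) (grad (fun w => γs w - γp w) y) *ᵥ v'
          - dirM (Arot *ᵥ n)
            (fun w => boundaryMatrix ν (grad γs w) (grad (fun w => γs w - γp w) w)) y *ᵥ v) := by
  have hs := h.contDiffAt_shear hy
  have hR : ContDiffAt ℝ 3 (fun w => γs w - γp w) y := hs.sub (h.contDiffAt_pressure hy)
  have grad_diff {f : V2 → ℂ} (hf : ContDiffAt ℝ 3 f y) : DifferentiableAt ℝ (grad f) y :=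
    (contDiffAt_grad (m := 1) hf (by norm_num)).differentiableAt one_ne_zero
  have coe_dotProduct (w : V2) : ((ν ⬝ᵥ w : ℝ) : ℂ) = complexify ν ⬝ᵥ complexify w := by
    simp [dotProduct, complexify]
  ext i
  have deriv_terms := congrFun (h.regularized_deriv_terms hy ν v') i
  have density_terms := congrFun (h.regularized_density_terms hy ν n v) i
  rw [dirM_boundaryMatrix (grad_diff hs) (grad_diff hR), dirV_grad (hs.of_le (by norm_num)),
    dirV_grad (hR.of_le (by norm_num)), Pi.neg_apply, h.tracV_elasticField hy, Fin.sum_univ_six]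
  simp only [regularizedTerms, Matrix.cons_val, coe_dotProduct]
  simp only [Matrix.sub_mulVec, Matrix.smul_mulVec, Matrix.vecMulVec_mulVec, Matrix.one_mulVec,
    op_smul_eq_smul, ← Matrix.mulVec_mulVec, Pi.add_apply, Pi.sub_apply, Pi.smul_apply,
    smul_eq_mul] at deriv_terms density_terms ⊢
  push_cast
  linear_combination -deriv_terms - density_terms

variable {n z : ℝ → V2} {u u' : ℝ → C2} {a b : ℝ} {x : V2}

lemma continuousOn_regularizedTerms (hz : Continuous z) (hn : Continuous n) (hu : Continuous u)
    (hu' : Continuous u') (hx : ∀ s ∈ Set.uIcc a b, x - z s ∈ U) (ν : V2) (k : Fin 6) :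
    ContinuousOn
      (fun s => regularizedTerms lam mu rho om ks γs γp ν (n s) (u s) (u' s) (x - z s) k)
      (Set.uIcc a b) := by
  have on_curve {G : Type} [TopologicalSpace G] {f : V2 → G} (hf : ContinuousOn f U) :
      Continuous fun s : Set.uIcc a b => f (x - z s) :=
    hf.comp_continuous (by fun_prop) fun s => hx s s.2
  have hγs := on_curve h.contDiffOn_shear.continuousOn
  have hγp := on_curve h.contDiffOn_pressure.continuousOn
  have hE := on_curve h.continuousOn_Emat
  have hdE := on_curve (h.continuousOn_dirM_Emat (Arot *ᵥ ν))
  have hgrad := on_curve h.contDiffOn_grad_sub.continuousOn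
  have hdγp := on_curve (continuousOn_dirD h.isOpen (h.contDiffOn_pressure.of_le (by norm_num))
    (Arot *ᵥ ν))
  have hcn : Continuous fun s : Set.uIcc a b => complexify (n s) := by fun_prop [complexify]
  have hdyad : Continuous fun s : Set.uIcc a b =>
      Matrix.vecMulVec (complexify ν) (complexify (n s)) := by fun_prop
  have hνn : Continuous fun s : Set.uIcc a b => ((ν ⬝ᵥ n s : ℝ) : ℂ) := by fun_prop
  have hνt : Continuous fun s : Set.uIcc a b => ((ν ⬝ᵥ Arot *ᵥ n s : ℝ) : ℂ) := by fun_prop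
  refine continuousOn_iff_continuous_domRestrict.2 ?_
  match k with
  | 0 =>
    have hmatrix := (((hγs.sub hγp).smul hdyad).sub
      ((hνn.mul hγs).smul (continuous_const (y := (1 : Matrix (Fin 2) (Fin 2) ℂ))))).sub
      ((hνt.mul hγs).smul (continuous_const (y := ArotC)))
    exact (hmatrix.matrix_mulVec (hu.comp continuous_subtype_val)).const_smul
      ((mu * ks ^ 2 : ℝ) : ℂ)
  | 1 | 2 | 3 | 4 | 5 =>
    simp only [Set.domRestrict_def, regularizedTerms, Matrix.cons_val]
    fun_prop

lemma neg_tracV_doubleLayer (hz : ∀ s, HasDerivAt z (Arot *ᵥ n s) s) (hn : Continuous n)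
    (hu : ∀ s, HasDerivAt u (u' s) s) (hu' : Continuous u') (hz_closed : z a = z b)
    (hu_closed : u a = u b) (hx : ∀ s ∈ Set.uIcc a b, x - z s ∈ U) (ν : V2) (i : Fin 2) :
    -tracV lam mu ν (doubleLayer lam mu rho om γs γp z n u a b) x i =
      ∑ k, ∫ s in a..b,
        regularizedTerms lam mu rho om ks γs γp ν (n s) (u s) (u' s) (x - z s) k i := by
  have hz_cont : Continuous z := continuous_iff_continuousAt.2 fun s => (hz s).continuousAt
  have hu_cont : Continuous u := continuous_iff_continuousAt.2 fun s => (hu s).continuousAt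
  have ht : Continuous fun s => Arot *ᵥ n s := by fun_prop
  have hM := contDiffOn_boundaryMatrix h.contDiffOn_grad_shear h.contDiffOn_grad_sub ν
  have terms (k : Fin 6) := (h.continuousOn_regularizedTerms hz_cont hn hu_cont hu' hx ν
    k).intervalIntegrable (μ := MeasureTheory.volume)
  let M w := boundaryMatrix ν (grad γs w) (grad (fun w => γs w - γp w) w)
  let total s := M (x - z s) *ᵥ u' s - dirM (Arot *ᵥ n s) M (x - z s) *ᵥ u s
  have main : IntervalIntegrable (fun s => ∑ k, regularizedTerms lam mu rho om ks γs γp ν (n s)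
      (u s) (u' s) (x - z s) k) MeasureTheory.volume a b := by
    simpa only [Finset.sum_fn] using IntervalIntegrable.sum Finset.univ fun k _ => terms k
  have htotal : IntervalIntegrable (fun s => (2 * mu : ℂ) • total s) MeasureTheory.volume a b :=
    ((continuousOn_deriv_mulVec_comp_const_sub h.isOpen hM hz ht hu hu'
      hx).fun_const_smul _).intervalIntegrable
  have total_integral : ∫ s in a..b, total s = 0 :=
    integral_deriv_mulVec_comp_const_sub h.isOpen hM hz ht hu hu' hx hz_closed hu_closed
  rw [h.tracV_doubleLayer hz hn hu hu' hz_closed hu_closed hx, ← intervalIntegral.integral_neg]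
  simp only [← intervalIntegral_apply (terms _)]
  calc ∫ s in a..b, -tracV lam mu ν (elasticField mu rho om γs γp (n s) (u s) (u' s)) (x - z s) i
      = ∫ s in a..b, (∑ k, regularizedTerms lam mu rho om ks γs γp ν (n s) (u s) (u' s) (x - z s) k
          + (2 * mu : ℂ) • total s) i :=
        intervalIntegral.integral_congr fun s hs =>
          congrFun (h.neg_tracV_elasticField (hx s hs) ν (n s) (u s) (u' s)) i
    _ = _ := by
        rw [← intervalIntegral_apply (main.add htotal), intervalIntegral.integral_add main htotal,
          intervalIntegral.integral_smul, total_integral, smul_zero, add_zero,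
          intervalIntegral.integral_finsetSum fun k _ => terms k, Finset.sum_apply]

end IsElasticPotentialPair

theorem elastic_hypersingular_regularization_general
    (h : IsElasticPotentialPair lam mu rho om ks kp U γs γp) {n z z' : ℝ → V2} {u u' : ℝ → C2}
    {a b : ℝ} {x : V2} (hz : ∀ s, HasDerivAt z (z' s) s) (hz' : Continuous z')
    (hn : ∀ s, z' s = Arot *ᵥ n s) (hu : ∀ s, HasDerivAt u (u' s) s) (hu' : Continuous u')
    (hz_closed : z a = z b) (hu_closed : u a = u b) (hx : ∀ s ∈ Set.uIcc a b, x - z s ∈ U)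
    (ν : V2) (i : Fin 2) :
    -tracV lam mu ν (doubleLayer lam mu rho om γs γp z n u a b) x i =
      ((mu * ks ^ 2 : ℝ) : ℂ) * (∫ s in a..b, ∑ j : Fin 2,
            ((γs (x - z s) - γp (x - z s)) * (ν i : ℂ) * (n s j : ℂ)
              - (if i = j then ((ν 0 * n s 0 + ν 1 * n s 1 : ℝ) : ℂ) * γs (x - z s) else 0)
              - ((ν 0 * z' s 0 + ν 1 * z' s 1 : ℝ) : ℂ) * γs (x - z s) * ArotC i j) * u s j)
        + ((2 * mu ^ 2 * ks ^ 2 : ℝ) : ℂ) * (∫ s in a..b,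
            ((ν 0 * z' s 0 + ν 1 * z' s 1 : ℝ) : ℂ)
              * ∑ j : Fin 2, (ArotC * Emat mu rho om γs γp (x - z s)) i j * u s j)
        - ((4 * mu ^ 2 : ℝ) : ℂ) * (∫ s in a..b, ∑ j : Fin 2,
            dirD (Arot *ᵥ ν) (fun w => Emat mu rho om γs γp w i j) (x - z s) * u' s j)
        + ((4 * mu ^ 2 / (lam + 2 * mu) : ℝ) : ℂ) * (∫ s in a..b,
            dirD (Arot *ᵥ ν) γp (x - z s) * u' s i)
        + ((2 * mu : ℝ) : ℂ) * (∫ s in a..b,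
            (∑ j : Fin 2, pd j (fun w => γs w - γp w) (x - z s) * (ArotC *ᵥ u' s) j) * (ν i : ℂ))
        - ((2 * mu : ℝ) : ℂ) * (∫ s in a..b, ((ν 0 : ℂ) * u' s 0 + (ν 1 : ℂ) * u' s 1)
            * (ArotC *ᵥ fun j => pd j (fun w => γs w - γp w) (x - z s)) i) := by
  have hn_cont : Continuous n := by
    have hn_rot : n = fun s => -(Arot *ᵥ z' s) := by
      simp only [hn, Arot_mulVec_Arot_mulVec, neg_neg]
    rw [hn_rot]
    fun_prop
  have hz_rot (s : ℝ) := hn s ▸ hz s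
  rw [h.neg_tracV_doubleLayer hz_rot hn_cont hu hu' hz_closed hu_closed hx, Fin.sum_univ_six]
  simp only [regularizedTerms, hn, Matrix.cons_val, Pi.smul_apply, smul_eq_mul, Matrix.mulVec,
    dotProduct, Fin.sum_univ_two, Matrix.add_apply, Matrix.neg_apply, Matrix.smul_apply, dirM,
    Matrix.one_apply, Matrix.vecMulVec_apply, Matrix.of_apply, complexify, grad, mul_assoc, mul_ite,
    mul_one, mul_zero, neg_mul, sub_eq_add_neg, intervalIntegral.integral_neg,
    intervalIntegral.integral_const_mul]

end Regularization

lemma IsElasticPotentialPair.of_helmholtz {lam mu rho om : ℝ} {U : Set V2} {γs γp : V2 → ℂ}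
    (hmu : 0 < mu) (hlm : 0 < lam + 2 * mu) (hrho : 0 < rho) (hom : om ≠ 0) (hU : IsOpen U)
    (hγs : ContDiffOn ℝ 3 γs U) (hγp : ContDiffOn ℝ 3 γp U)
    (hHs : IsHelmholtzOn (om * √(rho / mu) : ℝ) U γs)
    (hHp : IsHelmholtzOn (om * √(rho / (lam + 2 * mu)) : ℝ) U γp) :
    IsElasticPotentialPair lam mu rho om (om * √(rho / mu)) (om * √(rho / (lam + 2 * mu))) U γs γp
    where
  isOpen := hU
  contDiffOn_shear := hγs
  contDiffOn_pressure := hγp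
  helmholtz_shear := hHs
  helmholtz_pressure := hHp
  shear_modulus := by
    rw [mul_pow, Real.sq_sqrt (by positivity)]
    field_simp
  pressure_modulus := by
    rw [mul_pow, Real.sq_sqrt (by positivity)]
    field_simp
  inertia_ne_zero := by positivity

/-- Theorem 6.2: regularization of the elastic hypersingular operator `W_s`, stated at
points off the curve: with `D(x) = ∫₀^L (T_yẼ(z(s)))^T u(s) ds`, for every unit vector `ν`
(with tangent `τ = A ν`),
`−T_ν D(x) = μk_s² ∫ [R ν n^T − (ν·n)γ_s I − (ν·z')γ_s A] u ds
  + 2μ²k_s² ∫ (ν·z') A E u ds − 4μ² ∫ ((τ·∇)E) u' ds + (4μ²/(λ+2μ)) ∫ ((τ·∇)γ_p) u' ds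
  + 2μ ∫ (∇R·(A u')) ν ds − 2μ ∫ (ν·u') A ∇R ds`, componentwise. -/
theorem elastic_hypersingular_regularization (lam mu rho om ks kp : ℝ)
    (hmu : 0 < mu) (hlm : 0 < lam + mu) (hrho : 0 < rho) (hom : 0 < om)
    (hks : ks = om * Real.sqrt (rho / mu)) (hkp : kp = om * Real.sqrt (rho / (lam + 2 * mu)))
    (L : ℝ) (hL : 0 < L) (z : ℝ → V2) (hz : ContDiff ℝ 2 z)
    (hzper : Function.Periodic z L) (hzinj : Set.InjOn z (Set.Ico 0 L))
    (harc : ∀ s : ℝ, (deriv z s 0) ^ 2 + (deriv z s 1) ^ 2 = 1)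
    (nn : ℝ → V2) (hnn : ∀ s : ℝ, deriv z s = Arot.mulVec (nn s))
    (U : Set V2) (hU : IsOpen U) (γs γp : V2 → ℂ)
    (hγs : ContDiffOn ℝ 4 γs U) (hγp : ContDiffOn ℝ 4 γp U)
    (hHs : ∀ y ∈ U, pd 0 (pd 0 γs) y + pd 1 (pd 1 γs) y + (ks : ℂ) ^ 2 * γs y = 0)
    (hHp : ∀ y ∈ U, pd 0 (pd 0 γp) y + pd 1 (pd 1 γp) y + (kp : ℂ) ^ 2 * γp y = 0)
    (u : ℝ → C2) (hu : ContDiff ℝ 1 u) (huper : Function.Periodic u L)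
    (x : V2) (hx : ∀ s : ℝ, x - z s ∈ U)
    (ν : V2) (hν : (ν 0) ^ 2 + (ν 1) ^ 2 = 1) :
    ∀ i : Fin 2,
      -(tracV lam mu ν (fun w => fun i' => ∫ s in (0 : ℝ)..L, ∑ j : Fin 2,
          tracM lam mu (nn s) (fun y => Emat mu rho om γs γp (w - y)) (z s) j i' * u s j) x i)
        = ((mu * ks ^ 2 : ℝ) : ℂ) * (∫ s in (0 : ℝ)..L, ∑ j : Fin 2,
              ((γs (x - z s) - γp (x - z s)) * (ν i : ℂ) * (nn s j : ℂ)
                - (if i = j then ((ν 0 * nn s 0 + ν 1 * nn s 1 : ℝ) : ℂ) * γs (x - z s) else 0)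
                - ((ν 0 * deriv z s 0 + ν 1 * deriv z s 1 : ℝ) : ℂ) * γs (x - z s) * ArotC i j)
                * u s j)
          + ((2 * mu ^ 2 * ks ^ 2 : ℝ) : ℂ) * (∫ s in (0 : ℝ)..L,
              ((ν 0 * deriv z s 0 + ν 1 * deriv z s 1 : ℝ) : ℂ)
                * ∑ j : Fin 2, (ArotC * Emat mu rho om γs γp (x - z s)) i j * u s j)
          - ((4 * mu ^ 2 : ℝ) : ℂ) * (∫ s in (0 : ℝ)..L, ∑ j : Fin 2,
              dirD (Arot.mulVec ν) (fun w => Emat mu rho om γs γp w i j) (x - z s)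
                * deriv u s j)
          + ((4 * mu ^ 2 / (lam + 2 * mu) : ℝ) : ℂ) * (∫ s in (0 : ℝ)..L,
              dirD (Arot.mulVec ν) γp (x - z s) * deriv u s i)
          + ((2 * mu : ℝ) : ℂ) * (∫ s in (0 : ℝ)..L,
              (∑ j : Fin 2, pd j (fun w => γs w - γp w) (x - z s)
                  * ArotC.mulVec (deriv u s) j) * (ν i : ℂ))
          - ((2 * mu : ℝ) : ℂ) * (∫ s in (0 : ℝ)..L,
              ((ν 0 : ℂ) * deriv u s 0 + (ν 1 : ℂ) * deriv u s 1)
                * ArotC.mulVec (fun j => pd j (fun w => γs w - γp w) (x - z s)) i) := by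
  subst hks hkp
  have potentials := IsElasticPotentialPair.of_helmholtz hmu (by linarith) hrho hom.ne' hU
    (hγs.of_le (by norm_num)) (hγp.of_le (by norm_num)) hHs hHp
  exact elastic_hypersingular_regularization_general potentials
    (fun s => (hz.differentiable two_ne_zero s).hasDerivAt) (hz.continuous_deriv one_le_two) hnn
    (fun s => (hu.differentiable one_ne_zero s).hasDerivAt) hu.continuous_deriv_one
    hzper.eq.symm huper.eq.symm (fun s _ => hx s) ν

end
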